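/- arXiv:1911.06575 — 2 statements merged into one kernel-verified Lean document; each statement's English description precedes it below -/
import Mathlib

section
/- The subalgebra of type A₁ ⊕ A₁ ⊕ A₁ in 𝔰𝔬(12,ℂ) (type D₆) obtained as a maximal subalgebra of the maximal subalgebra 𝔰𝔩(2,ℂ) ⊕ 𝔰𝔭(6,ℂ) of 𝔰𝔬(12,ℂ) is not itself a maximal subalgebra of 𝔰𝔬(12,ℂ): one has the chain of proper inclusions 𝔰𝔩(2,ℂ)⊕𝔰𝔩(2,ℂ)⊕𝔰𝔩(2,ℂ) ⊂ 𝔰𝔩(2,ℂ) ⊕ 𝔰𝔭(6,ℂ) ⊂ 𝔰𝔬(12,ℂ), where the first subalgebra is maximal in the second and the second is maximal in 𝔰𝔬(12,ℂ). -/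
/-!
Write `ℂ¹² = ℂ² ⊗ ℂ⁶`, where each factor carries a symplectic form; the product of the two forms is
symmetric, so `𝔰𝔩(2) ⊕ 𝔰𝔭(6)` embeds in `𝔰𝔬(12)` by `(s, k) ↦ s ⊗ 1 + 1 ⊗ k`. Likewise
`ℂ⁶ = ℂ² ⊗ ℂ³` with a symplectic form on `ℂ²` and a symmetric one on `ℂ³` embeds `𝔰𝔩(2) ⊕ 𝔰𝔬(3)` in
`𝔰𝔭(6)`, and `𝔰𝔬(3) ≅ 𝔰𝔩(2)`. This gives `a ⊆ b ⊆ 𝔰𝔬(12)` of types `3A₁` and `A₁ ⊕ C₃`.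

In both steps the smaller algebra `𝔥` has an irreducible complement in the larger one `𝔤`, so any
subalgebra strictly above `𝔥` is all of `𝔤`:
* `𝔰𝔬(12) = b ⊕ (𝔰𝔩(2) ⊗ Λ²₀)`, where `Λ²₀` is the traceless part of the space of `6 × 6` matrices
  that are self-adjoint for the symplectic form;
* `𝔰𝔭(6) = (𝔰𝔩(2) ⊕ 𝔰𝔬(3)) ⊕ (𝔰𝔩(2) ⊗ Sym²₀)`, where `Sym²₀` is the space of traceless symmetric
  `3 × 3` matrices.

Irreducibility is proved with `2 × 2` block matrices. A subspace stable under
`E = fromBlocks 0 1 0 0` and `F = fromBlocks 0 0 1 0` is a sum `𝔰𝔩(2) ⊗ U + 1 ⊗ D` (`sl2_closed`,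
`sl2_mem`), which reduces the claims to the irreducibility of `Λ²₀` under `𝔰𝔭(6)` (`ham_irred`) and
of `Sym²₀` under `𝔰𝔬(3)` (`sym3_irred`). The same block decomposition reduces `ham_irred` to `3 × 3`
matrices. The statements carry the scalar matrices along, as `1 ∈ U` holds in each application.

The computations take place in the Lie algebra of matrices that are skew-adjoint for the block
form `soForm`, which is isomorphic to `Orthogonal.so (Fin 12) ℂ` (`soForm_equiv`).
-/

/-!
STATEMENT 7: The subalgebra of type A₁ ⊕ A₁ ⊕ A₁ in 𝔰𝔬(12,ℂ) (type D₆) obtained as a maximal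
subalgebra of the maximal subalgebra 𝔰𝔩(2,ℂ) ⊕ 𝔰𝔭(6,ℂ) of 𝔰𝔬(12,ℂ) is not itself a maximal
subalgebra of 𝔰𝔬(12,ℂ): one has the chain of proper inclusions
𝔰𝔩(2,ℂ)⊕𝔰𝔩(2,ℂ)⊕𝔰𝔩(2,ℂ) ⊂ 𝔰𝔩(2,ℂ)⊕𝔰𝔭(6,ℂ) ⊂ 𝔰𝔬(12,ℂ),
where the first subalgebra is maximal in the second and the second is maximal in 𝔰𝔬(12,ℂ).
-/

section ProdLie

variable {L₁ L₂ : Type*} [LieRing L₁] [LieRing L₂]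

instance Prod.instBracketLie : Bracket (L₁ × L₂) (L₁ × L₂) :=
  ⟨fun x y => (⁅x.1, y.1⁆, ⁅x.2, y.2⁆)⟩

/-- The product of two Lie rings. -/
instance Prod.instLieRing : LieRing (L₁ × L₂) :=
  { (inferInstance : AddCommGroup (L₁ × L₂)), (inferInstance : Bracket (L₁ × L₂) (L₁ × L₂)) with
    add_lie := fun x y z => by ext <;> exact add_lie _ _ _
    lie_add := fun x y z => by ext <;> exact lie_add _ _ _
    lie_self := fun x => by ext <;> exact lie_self _
    leibniz_lie := fun x y z => by ext <;> exact leibniz_lie _ _ _ }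

/-- The product of two Lie algebras. -/
instance Prod.instLieAlgebra {R : Type*} [CommRing R] [LieAlgebra R L₁] [LieAlgebra R L₂] :
    LieAlgebra R (L₁ × L₂) where
  lie_smul t x y := by ext <;> exact lie_smul _ _ _

end ProdLie

open LieAlgebra

/-- A maximal Lie subalgebra: a proper subalgebra not properly contained in any other proper
subalgebra. -/
def IsMaxSubalgebra {K L : Type*} [Field K] [LieRing L] [LieAlgebra K L]
    (m : LieSubalgebra K L) : Prop :=
  m ≠ ⊤ ∧ ∀ s : LieSubalgebra K L, s ≠ ⊤ → m ≤ s → s = m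

open Matrix LieAlgebra

attribute [local instance] LieRing.ofAssociativeRing

/-! ### Block matrices and the action of `𝔰𝔩(2)` -/

section Blocks

variable {n : Type*} [Fintype n] [DecidableEq n]
variable {K : Type*} [LieRing K] [LieAlgebra ℂ K]

/-- The homomorphism `(s, k) ↦ s ⊗ 1 + 1 ⊗ φ k` from `𝔰𝔩(2) ⊕ K` to the endomorphisms of `ℂ² ⊗ ℂⁿ`,
written as `2 × 2` matrices of `n × n` blocks. -/
def blk (φ : K →ₗ⁅ℂ⁆ Matrix n n ℂ) :
    ↥(SpecialLinear.sl (Fin 2) ℂ) × K →ₗ⁅ℂ⁆ Matrix (n ⊕ n) (n ⊕ n) ℂ where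
  toFun p := fromBlocks (p.1.1 0 0 • 1 + φ p.2) (p.1.1 0 1 • 1) (p.1.1 1 0 • 1)
    (p.1.1 1 1 • 1 + φ p.2)
  map_add' p q := by
    obtain ⟨⟨s, hs⟩, k⟩ := p
    obtain ⟨⟨t, ht⟩, l⟩ := q
    change fromBlocks ((s 0 0 + t 0 0) • 1 + φ (k + l)) ((s 0 1 + t 0 1) • 1)
      ((s 1 0 + t 1 0) • 1) ((s 1 1 + t 1 1) • 1 + φ (k + l)) = _
    rw [fromBlocks_add, map_add]
    congr 1 <;> module
  map_smul' c p := by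
    obtain ⟨⟨s, hs⟩, k⟩ := p
    change fromBlocks ((c * s 0 0) • 1 + φ (c • k)) ((c * s 0 1) • 1)
      ((c * s 1 0) • 1) ((c * s 1 1) • 1 + φ (c • k)) = _
    rw [RingHom.id_apply, fromBlocks_smul, map_smul]
    congr 1 <;> module
  map_lie' {p q} := by
    obtain ⟨⟨s, hs⟩, k⟩ := p
    obtain ⟨⟨t, ht⟩, l⟩ := q
    have hst : ∀ i j, (s * t - t * s) i j =
        s i 0 * t 0 j + s i 1 * t 1 j - (t i 0 * s 0 j + t i 1 * s 1 j) := by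
      intro i j
      simp [Matrix.mul_apply, Fin.sum_univ_two]
    change fromBlocks ((s * t - t * s : Matrix _ _ ℂ) 0 0 • 1 + φ ⁅k, l⁆)
      ((s * t - t * s : Matrix _ _ ℂ) 0 1 • 1)
      ((s * t - t * s : Matrix _ _ ℂ) 1 0 • 1)
      ((s * t - t * s : Matrix _ _ ℂ) 1 1 • 1 + φ ⁅k, l⁆) =
      ⁅fromBlocks (s 0 0 • 1 + φ k) (s 0 1 • 1) (s 1 0 • 1) (s 1 1 • 1 + φ k),
       fromBlocks (t 0 0 • 1 + φ l) (t 0 1 • 1) (t 1 0 • 1) (t 1 1 • 1 + φ l)⁆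
    simp only [hst]
    rw [LieRing.of_associative_ring_bracket, fromBlocks_multiply, fromBlocks_multiply,
      sub_eq_add_neg (fromBlocks _ _ _ _), fromBlocks_neg, fromBlocks_add, LieHom.map_lie,
      LieRing.of_associative_ring_bracket]
    simp only [mul_add, add_mul, smul_mul_assoc, mul_smul_comm, mul_one, one_mul]
    congr 1 <;> module

theorem mem_blk_range (φ : K →ₗ⁅ℂ⁆ Matrix n n ℂ) (X : Matrix (n ⊕ n) (n ⊕ n) ℂ) :
    X ∈ (blk φ).range ↔ ∃ x y z : ℂ, ∃ k ∈ φ.range,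
      X = fromBlocks (x • 1 + k) (y • 1) (z • 1) (-(x • 1) + k) := by
  constructor
  · rintro ⟨⟨⟨s, hs⟩, k⟩, rfl⟩
    refine ⟨s 0 0, s 0 1, s 1 0, φ k, ⟨k, rfl⟩, ?_⟩
    have h : s 0 0 + s 1 1 = 0 := by
      have : Matrix.trace s = 0 := hs
      rwa [Matrix.trace_fin_two] at this
    change fromBlocks (s 0 0 • 1 + φ k) (s 0 1 • 1) (s 1 0 • 1) (s 1 1 • 1 + φ k) = _
    rw [eq_neg_of_add_eq_zero_right h, neg_smul]
  · rintro ⟨x, y, z, _, ⟨k, rfl⟩, rfl⟩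
    have hs : !![x, y; z, -x] ∈ SpecialLinear.sl (Fin 2) ℂ := by
      change Matrix.trace !![x, y; z, -x] = 0
      simp [Matrix.trace_fin_two]
    refine ⟨⟨⟨!![x, y; z, -x], hs⟩, k⟩, ?_⟩
    · change fromBlocks (x • 1 + φ k) (y • 1) (z • 1) ((-x) • 1 + φ k) = _
      rw [neg_smul]; rfl

theorem blk_injective [Nonempty n] (φ : K →ₗ⁅ℂ⁆ Matrix n n ℂ) (hφ : Function.Injective φ) :
    Function.Injective (blk φ) := by
  rw [injective_iff_map_eq_zero]
  rintro ⟨⟨s, hs⟩, k⟩ h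
  change fromBlocks (s 0 0 • 1 + φ k) (s 0 1 • 1) (s 1 0 • 1) (s 1 1 • 1 + φ k) = 0 at h
  have ht : s 0 0 + s 1 1 = 0 := by
    have : Matrix.trace s = 0 := hs
    rwa [Matrix.trace_fin_two] at this
  rw [← fromBlocks_zero, fromBlocks_inj] at h
  obtain ⟨h1, h2, h3, h4⟩ := h
  have key : ∀ c : ℂ, c • (1 : Matrix n n ℂ) = 0 → c = 0 := fun c hc =>
    (smul_eq_zero.1 hc).resolve_right one_ne_zero
  have h5 : s 0 0 = s 1 1 := by
    have : (s 0 0 - s 1 1) • (1 : Matrix n n ℂ) = 0 := by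
      rw [sub_smul, ← add_sub_add_right_eq_sub _ _ (φ k), h1, h4, sub_zero]
    exact sub_eq_zero.1 (key _ this)
  have h00 : s 0 0 = 0 := by linear_combination (ht + h5) / 2
  have h11 : s 1 1 = 0 := by rw [← h5, h00]
  have hk : k = 0 := hφ (by simpa [h00] using h1)
  subst hk
  have : s = 0 := by
    ext i j; fin_cases i <;> fin_cases j <;> simp [h00, h11, key _ h2, key _ h3]
  subst this
  rfl

/-- A subspace stable under `ad E` and `ad F`, for `E = fromBlocks 0 1 0 0` and
`F = fromBlocks 0 0 1 0`, contains the components of each of its elements along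
`M₂ ⊗ Mₙ = (𝔰𝔩(2) ⊗ Mₙ) ⊕ (1 ⊗ Mₙ)`. The first part says that `E ⊗ x` generates `𝔰𝔩(2) ⊗ x`, so the
components in `𝔰𝔩(2) ⊗ Mₙ` can all be recorded in the upper right block. -/
theorem sl2_closed (V : Submodule ℂ (Matrix (n ⊕ n) (n ⊕ n) ℂ))
    (hE : ∀ X ∈ V, ⁅(fromBlocks 0 1 0 0 : Matrix (n ⊕ n) (n ⊕ n) ℂ), X⁆ ∈ V)
    (hF : ∀ X ∈ V, ⁅(fromBlocks 0 0 1 0 : Matrix (n ⊕ n) (n ⊕ n) ℂ), X⁆ ∈ V) :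
    (∀ x, fromBlocks 0 x 0 0 ∈ V → fromBlocks 0 0 x 0 ∈ V ∧ fromBlocks x 0 0 (-x) ∈ V) ∧
    ∀ p q r t, fromBlocks p q r t ∈ V → fromBlocks 0 q 0 0 ∈ V ∧ fromBlocks 0 r 0 0 ∈ V ∧
      fromBlocks 0 (p - t) 0 0 ∈ V ∧ fromBlocks (p + t) 0 0 (p + t) ∈ V := by
  have hE' : ∀ p q r t, fromBlocks p q r t ∈ V → fromBlocks r (t - p) 0 (-r) ∈ V := by
    intro p q r t h
    have := hE _ h
    simp only [LieRing.of_associative_ring_bracket, fromBlocks_multiply, sub_eq_add_neg,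
      fromBlocks_neg, fromBlocks_add] at this
    simpa [sub_eq_add_neg] using this
  have hF' : ∀ p q r t, fromBlocks p q r t ∈ V → fromBlocks (-q) 0 (p - t) q ∈ V := by
    intro p q r t h
    have := hF _ h
    simp only [LieRing.of_associative_ring_bracket, fromBlocks_multiply, sub_eq_add_neg,
      fromBlocks_neg, fromBlocks_add] at this
    simpa [sub_eq_add_neg] using this
  have hEE : ∀ p q r t, fromBlocks p q r t ∈ V → fromBlocks 0 r 0 0 ∈ V := by
    intro p q r t h
    have := V.smul_mem (-(1 / 2) : ℂ) (hE' _ _ _ _ (hE' _ _ _ _ h))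
    rw [fromBlocks_smul] at this
    convert this using 2 <;> module
  have hFF : ∀ p q r t, fromBlocks p q r t ∈ V → fromBlocks 0 0 q 0 ∈ V := by
    intro p q r t h
    have := V.smul_mem (-(1 / 2) : ℂ) (hF' _ _ _ _ (hF' _ _ _ _ h))
    rw [fromBlocks_smul] at this
    convert this using 2 <;> module
  have h1 : ∀ x, fromBlocks 0 x 0 0 ∈ V → fromBlocks 0 0 x 0 ∈ V ∧ fromBlocks x 0 0 (-x) ∈ V := by
    intro x h
    refine ⟨hFF _ _ _ _ h, ?_⟩
    have := V.neg_mem (hF' _ _ _ _ h)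
    rw [fromBlocks_neg] at this
    convert this using 2 <;> module
  refine ⟨h1, fun p q r t h => ?_⟩
  have hq := hEE _ _ _ _ (hFF _ _ _ _ h)
  have hr := hEE _ _ _ _ h
  have hd : fromBlocks 0 (p - t) 0 0 ∈ V := by
    have := V.sub_mem (h1 r hr).2 (hE' _ _ _ _ h)
    rw [sub_eq_add_neg, fromBlocks_neg, fromBlocks_add] at this
    convert this using 2 <;> module
  refine ⟨hq, hr, hd, ?_⟩
  have := V.sub_mem (V.smul_mem (2 : ℂ) (V.sub_mem (V.sub_mem h hq) (h1 r hr).1)) (h1 _ hd).2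
  simp only [sub_eq_add_neg, fromBlocks_neg, fromBlocks_add, fromBlocks_smul] at this
  convert this using 2 <;> module

/-- Converse of `sl2_closed`: a block matrix can be rebuilt from its components. -/
theorem sl2_mem (V : Submodule ℂ (Matrix (n ⊕ n) (n ⊕ n) ℂ))
    (hE : ∀ X ∈ V, ⁅(fromBlocks 0 1 0 0 : Matrix (n ⊕ n) (n ⊕ n) ℂ), X⁆ ∈ V)
    (hF : ∀ X ∈ V, ⁅(fromBlocks 0 0 1 0 : Matrix (n ⊕ n) (n ⊕ n) ℂ), X⁆ ∈ V)
    (p q r t : Matrix n n ℂ)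
    (hq : fromBlocks 0 q 0 0 ∈ V) (hr : fromBlocks 0 r 0 0 ∈ V)
    (hd : fromBlocks 0 (p - t) 0 0 ∈ V) (hs : fromBlocks (p + t) 0 0 (p + t) ∈ V) :
    fromBlocks p q r t ∈ V := by
  have h1 := (sl2_closed V hE hF).1
  have := V.add_mem (V.add_mem hq (h1 _ hr).1)
    (V.smul_mem (1 / 2 : ℂ) (V.add_mem (h1 _ hd).2 hs))
  simp only [fromBlocks_add, fromBlocks_smul] at this
  convert this using 2 <;> module

/-- The matrices `x` with `E ⊗ x ∈ V`, where `E` is the raising element of `𝔰𝔩(2)`. -/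
def upper (V : Submodule ℂ (Matrix (n ⊕ n) (n ⊕ n) ℂ)) : Submodule ℂ (Matrix n n ℂ) where
  carrier := {x | fromBlocks 0 x 0 0 ∈ V}
  zero_mem' := by simp
  add_mem' {x y} hx hy := by simpa [fromBlocks_add] using V.add_mem hx hy
  smul_mem' c x hx := by simpa [fromBlocks_smul] using V.smul_mem c hx

/-- The matrices `x` with `1 ⊗ x ∈ V`. -/
def diag (V : Submodule ℂ (Matrix (n ⊕ n) (n ⊕ n) ℂ)) : Submodule ℂ (Matrix n n ℂ) where
  carrier := {x | fromBlocks x 0 0 x ∈ V}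
  zero_mem' := by simp
  add_mem' {x y} hx hy := by simpa [fromBlocks_add] using V.add_mem hx hy
  smul_mem' c x hx := by simpa [fromBlocks_smul] using V.smul_mem c hx

theorem lie_diag_upper (R u : Matrix n n ℂ) :
    ⁅(fromBlocks R 0 0 R : Matrix (n ⊕ n) (n ⊕ n) ℂ),
      (fromBlocks 0 u 0 0 : Matrix (n ⊕ n) (n ⊕ n) ℂ)⁆ = fromBlocks 0 ⁅R, u⁆ 0 0 := by
  simp [LieRing.of_associative_ring_bracket, fromBlocks_multiply, sub_eq_add_neg,
      fromBlocks_neg, fromBlocks_add]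

theorem lie_diag_diag (R u : Matrix n n ℂ) :
    ⁅(fromBlocks R 0 0 R : Matrix (n ⊕ n) (n ⊕ n) ℂ),
      (fromBlocks u 0 0 u : Matrix (n ⊕ n) (n ⊕ n) ℂ)⁆ = fromBlocks ⁅R, u⁆ 0 0 ⁅R, u⁆ := by
  simp [LieRing.of_associative_ring_bracket, fromBlocks_multiply, sub_eq_add_neg,
      fromBlocks_neg, fromBlocks_add]

end Blocks

/-! ### `𝔰𝔬(3)`-modules of `3 × 3` matrices -/

section Three

/-- `𝔰𝔬(3)` acts irreducibly on itself. In terms of vectors of `ℂ³` the bracket is the cross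
product. -/
theorem skew3_irred (U : Submodule ℂ (Matrix (Fin 3) (Fin 3) ℂ))
    (hU : ∀ R : Matrix (Fin 3) (Fin 3) ℂ, Rᵀ = -R → ∀ u ∈ U, ⁅R, u⁆ ∈ U)
    (u : Matrix (Fin 3) (Fin 3) ℂ) (hu : u ∈ U) (hs : uᵀ = -u) (h0 : u ≠ 0)
    (v : Matrix (Fin 3) (Fin 3) ℂ) (hv : vᵀ = -v) : v ∈ U := by
  let m : ℂ → ℂ → ℂ → Matrix (Fin 3) (Fin 3) ℂ := fun a b c => !![0, -c, b; c, 0, -a; -b, a, 0]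
  have hm : ∀ w : Matrix (Fin 3) (Fin 3) ℂ, wᵀ = -w → w = m (w 2 1) (w 0 2) (w 1 0) := by
    intro w hw
    have e : ∀ i j, w j i = - w i j := fun i j => congr_fun (congr_fun hw i) j
    have d : ∀ i, w i i = 0 := fun i => self_eq_neg.1 (e i i)
    ext i j; fin_cases i <;> fin_cases j <;> simp [m, d] <;> exact e _ _
  have hmt : ∀ a b c, (m a b c)ᵀ = - m a b c := by
    intro a b c; ext i j; fin_cases i <;> fin_cases j <;> simp [m]
  have hl : ∀ a b c x y z, ⁅m a b c, m x y z⁆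
      = m (b * z - c * y) (c * x - a * z) (a * y - b * x) := by
    intro a b c x y z
    ext i j; fin_cases i <;> fin_cases j <;>
      simp [m, LieRing.of_associative_ring_bracket] <;> ring
  have hsm : ∀ t a b c, t • m a b c = m (t * a) (t * b) (t * c) := by
    intro t a b c; ext i j; fin_cases i <;> fin_cases j <;> simp [m]
  have had : ∀ a b c x y z, m a b c + m x y z = m (a + x) (b + y) (c + z) := by
    intro a b c x y z; ext i j; fin_cases i <;> fin_cases j <;> simp [m] <;> ring
  have hL : ∀ a b c x y z, m x y z ∈ U → m (b * z - c * y) (c * x - a * z) (a * y - b * x) ∈ U := by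
    intro a b c x y z h
    rw [← hl]; exact hU _ (hmt _ _ _) _ h
  have hall : (m 1 0 0 ∈ U ∧ m 0 1 0 ∈ U) ∨ (m 0 1 0 ∈ U ∧ m 0 0 1 ∈ U) ∨
      (m 0 0 1 ∈ U ∧ m 1 0 0 ∈ U) → v ∈ U := by
    intro h
    have h3 : m 1 0 0 ∈ U ∧ m 0 1 0 ∈ U ∧ m 0 0 1 ∈ U := by
      rcases h with ⟨h1, h2⟩ | ⟨h1, h2⟩ | ⟨h1, h2⟩
      · exact ⟨h1, h2, by simpa using hL 1 0 0 _ _ _ h2⟩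
      · exact ⟨by simpa using hL 0 1 0 _ _ _ h2, h1, h2⟩
      · exact ⟨h2, by simpa using hL 0 0 1 _ _ _ h2, h1⟩
    rw [hm v hv]
    have := U.add_mem (U.add_mem (U.smul_mem (v 2 1) h3.1) (U.smul_mem (v 0 2) h3.2.1))
      (U.smul_mem (v 1 0) h3.2.2)
    simpa [hsm, had] using this
  rw [hm u hs] at hu h0
  generalize u 2 1 = a at *
  generalize u 0 2 = b at *
  generalize u 1 0 = c at *
  -- For `i ≠ j`, `eᵢ × (eⱼ × u) = (eᵢ · u) eⱼ`, so a nonzero coordinate of `u` yields two basis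
  -- vectors, and their cross product is the third up to sign.
  by_cases ha : a = 0
  · by_cases hb : b = 0
    · by_cases hc : c = 0
      · subst ha hb hc
        exact absurd (by ext i j; fin_cases i <;> fin_cases j <;> simp [m]) h0
      · have h1 := hL 0 0 1 _ _ _ (hL 1 0 0 _ _ _ hu)
        have h2 := hL 0 0 1 _ _ _ (hL 0 1 0 _ _ _ hu)
        have hu1 := U.smul_mem c⁻¹ h1
        have hu2 := U.smul_mem c⁻¹ h2
        simp [hsm, hc] at hu1 hu2
        exact hall (Or.inl ⟨hu1, hu2⟩)
    · have h1 := hL 0 1 0 _ _ _ (hL 0 0 1 _ _ _ hu)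
      have h2 := hL 0 1 0 _ _ _ (hL 1 0 0 _ _ _ hu)
      have hu1 := U.smul_mem b⁻¹ h1
      have hu2 := U.smul_mem b⁻¹ h2
      simp [hsm, hb] at hu1 hu2
      exact hall (Or.inr (Or.inr ⟨hu1, hu2⟩))
  · have h1 := hL 1 0 0 _ _ _ (hL 0 1 0 _ _ _ hu)
    have h2 := hL 1 0 0 _ _ _ (hL 0 0 1 _ _ _ hu)
    have hu1 := U.smul_mem a⁻¹ h1
    have hu2 := U.smul_mem a⁻¹ h2
    simp [hsm, ha] at hu1 hu2
    exact hall (Or.inr (Or.inl ⟨hu1, hu2⟩))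

/-- The traceless symmetric `3 × 3` matrices form an irreducible `𝔰𝔬(3)`-module: an invariant
subspace containing `1` and a nonscalar symmetric matrix contains all symmetric matrices. -/
theorem sym3_irred (U : Submodule ℂ (Matrix (Fin 3) (Fin 3) ℂ))
    (hU : ∀ R : Matrix (Fin 3) (Fin 3) ℂ, Rᵀ = -R → ∀ u ∈ U, ⁅R, u⁆ ∈ U) (h1 : 1 ∈ U)
    (u : Matrix (Fin 3) (Fin 3) ℂ) (hu : u ∈ U) (hs : uᵀ = u) (h0 : ∀ c : ℂ, u ≠ c • 1)
    (v : Matrix (Fin 3) (Fin 3) ℂ) (hv : vᵀ = v) : v ∈ U := by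
  let m : ℂ → ℂ → ℂ → ℂ → ℂ → ℂ → Matrix (Fin 3) (Fin 3) ℂ :=
    fun a b c d e f => !![a, f, e; f, b, d; e, d, c]
  let k : ℂ → ℂ → ℂ → Matrix (Fin 3) (Fin 3) ℂ := fun a b c => !![0, -c, b; c, 0, -a; -b, a, 0]
  have hm : ∀ w : Matrix (Fin 3) (Fin 3) ℂ, wᵀ = w →
      w = m (w 0 0) (w 1 1) (w 2 2) (w 1 2) (w 0 2) (w 0 1) := by
    intro w hw
    have e : ∀ i j, w j i = w i j := fun i j => congr_fun (congr_fun hw i) j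
    ext i j; fin_cases i <;> fin_cases j <;> simp [m] <;> exact e _ _
  have hkt : ∀ a b c, (k a b c)ᵀ = - k a b c := by
    intro a b c; ext i j; fin_cases i <;> fin_cases j <;> simp [k]
  have hsm : ∀ t a b c d e f, t • m a b c d e f
      = m (t * a) (t * b) (t * c) (t * d) (t * e) (t * f) := by
    intro t a b c d e f; ext i j; fin_cases i <;> fin_cases j <;> simp [m]
  have had : ∀ a b c d e f a' b' c' d' e' f', m a b c d e f + m a' b' c' d' e' f'
      = m (a + a') (b + b') (c + c') (d + d') (e + e') (f + f') := by
    intro a b c d e f a' b' c' d' e' f'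
    ext i j; fin_cases i <;> fin_cases j <;> simp [m]
  have L1 : ∀ a b c d e f, m a b c d e f ∈ U → m 0 (-2 * d) (2 * d) (b - c) f (-e) ∈ U := by
    intro a b c d e f h
    have := hU _ (hkt 1 0 0) _ h
    convert this using 1
    ext i j; fin_cases i <;> fin_cases j <;>
      simp [m, k, LieRing.of_associative_ring_bracket] <;> ring
  have L2 : ∀ a b c d e f, m a b c d e f ∈ U → m (2 * e) 0 (-2 * e) (-f) (c - a) d ∈ U := by
    intro a b c d e f h
    have := hU _ (hkt 0 1 0) _ h
    convert this using 1
    ext i j; fin_cases i <;> fin_cases j <;>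
      simp [m, k, LieRing.of_associative_ring_bracket] <;> ring
  have L3 : ∀ a b c d e f, m a b c d e f ∈ U → m (-2 * f) (2 * f) 0 e (-d) (a - b) ∈ U := by
    intro a b c d e f h
    have := hU _ (hkt 0 0 1) _ h
    convert this using 1
    ext i j; fin_cases i <;> fin_cases j <;>
      simp [m, k, LieRing.of_associative_ring_bracket] <;> ring
  have hall : m 0 0 0 1 0 0 ∈ U ∨ m 0 0 0 0 1 0 ∈ U ∨ m 0 0 0 0 0 1 ∈ U → v ∈ U := by
    intro h
    have h3 : m 0 0 0 1 0 0 ∈ U ∧ m 0 0 0 0 1 0 ∈ U ∧ m 0 0 0 0 0 1 ∈ U := by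
      rcases h with h | h | h
      · have i2 := L3 _ _ _ _ _ _ h
        have i3 := L2 _ _ _ _ _ _ h
        have i2' := U.smul_mem (-1) i2
        simp [hsm] at i2' i3
        exact ⟨h, i2', i3⟩
      · have i2 := L3 _ _ _ _ _ _ h
        have i3 := L1 _ _ _ _ _ _ h
        have i3' := U.smul_mem (-1) i3
        simp [hsm] at i2 i3'
        exact ⟨i2, h, i3'⟩
      · have i2 := L1 _ _ _ _ _ _ h
        have i3 := L2 _ _ _ _ _ _ h
        have i3' := U.smul_mem (-1) i3
        simp [hsm] at i2 i3'
        exact ⟨i3', i2, h⟩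
    have g1 := L1 _ _ _ _ _ _ h3.1
    have g2 := L3 _ _ _ _ _ _ h3.2.2
    have hI : m 1 1 1 0 0 0 ∈ U := by
      convert h1 using 1
      ext i j; fin_cases i <;> fin_cases j <;> simp [m]
    rw [hm v hv]
    have := U.add_mem (U.add_mem (U.add_mem (U.smul_mem (v 1 2) h3.1) (U.smul_mem (v 0 2) h3.2.1))
      (U.smul_mem (v 0 1) h3.2.2)) (U.add_mem (U.add_mem
        (U.smul_mem ((v 0 0 + v 1 1 + v 2 2) / 3) hI)
        (U.smul_mem ((2 * v 2 2 - v 0 0 - v 1 1) / 6) g1))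
        (U.smul_mem (-(2 * v 0 0 - v 1 1 - v 2 2) / 6) g2))
    simp only [hsm, had] at this
    convert this using 2 <;> ring
  -- Let `Dᵢ` be the bracket with the `i`-th rotation generator. On symmetric matrices the
  -- eigenvalues of `Dᵢ` are `0, ±i, ±2i`; `D₁²(D₁² + 4)` keeps only the entries `e, f` (its
  -- `±i` part), and `D₂²(D₂² + 4)` only `d, f`, so their product isolates the entry `f`.
  have hoff : ∀ a b c d e f, m a b c d e f ∈ U → m 0 0 0 0 0 (9 * f) ∈ U := by
    intro a b c d e f h
    have P1 : ∀ a b c d e f, m a b c d e f ∈ U → m 0 0 0 0 (-3 * e) (-3 * f) ∈ U := by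
      intro a b c d e f h
      have i2 := L1 _ _ _ _ _ _ (L1 _ _ _ _ _ _ h)
      have i4 := L1 _ _ _ _ _ _ (L1 _ _ _ _ _ _ i2)
      have := U.add_mem i4 (U.smul_mem 4 i2)
      simp only [hsm, had] at this
      convert this using 2 <;> ring
    have P2 : ∀ a b c d e f, m a b c d e f ∈ U → m 0 0 0 (-3 * d) 0 (-3 * f) ∈ U := by
      intro a b c d e f h
      have i2 := L2 _ _ _ _ _ _ (L2 _ _ _ _ _ _ h)
      have i4 := L2 _ _ _ _ _ _ (L2 _ _ _ _ _ _ i2)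
      have := U.add_mem i4 (U.smul_mem 4 i2)
      simp only [hsm, had] at this
      convert this using 2 <;> ring
    have := P1 _ _ _ _ _ _ (P2 _ _ _ _ _ _ h)
    convert this using 2 <;> ring
  -- It remains to move some nonzero off-diagonal entry or difference of diagonal entries into
  -- position `f` by means of the `Dᵢ`.
  have hoff' : ∀ a b c d e f, m a b c d e f ∈ U → f ≠ 0 → v ∈ U := by
    intro a b c d e f h hf
    have := U.smul_mem (9 * f)⁻¹ (hoff _ _ _ _ _ _ h)
    rw [hsm, inv_mul_cancel₀ (by simpa using hf)] at this
    exact hall (Or.inr (Or.inr (by simpa using this)))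
  have hu' : m (u 0 0) (u 1 1) (u 2 2) (u 1 2) (u 0 2) (u 0 1) ∈ U := by rwa [← hm u hs]
  by_cases hf : u 0 1 = 0
  swap
  · exact hoff' _ _ _ _ _ _ hu' hf
  by_cases hd : u 1 2 = 0
  swap
  · exact hoff' _ _ _ _ _ _ (L2 _ _ _ _ _ _ hu') hd
  by_cases he : u 0 2 = 0
  swap
  · exact hoff' _ _ _ _ _ _ (L1 _ _ _ _ _ _ hu') (neg_ne_zero.2 he)
  by_cases hab : u 0 0 = u 1 1
  swap
  · exact hoff' _ _ _ _ _ _ (L3 _ _ _ _ _ _ hu') (sub_ne_zero.2 hab)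
  by_cases hbc : u 1 1 = u 2 2
  swap
  · exact hoff' _ _ _ _ _ _ (L2 _ _ _ _ _ _ (L1 _ _ _ _ _ _ hu')) (sub_ne_zero.2 hbc)
  refine absurd ?_ (h0 (u 0 0))
  rw [hm u hs]
  ext i j; fin_cases i <;> fin_cases j <;> simp [m, hf, hd, he, hab, hbc]

theorem sym3_centralizer (u : Matrix (Fin 3) (Fin 3) ℂ)
    (h : ∀ S : Matrix (Fin 3) (Fin 3) ℂ, Sᵀ = S → ⁅S, u⁆ = 0) : ∃ c : ℂ, u = c • 1 := by
  have h1 := h !![1, 0, 0; 0, 0, 0; 0, 0, 0] (by ext i j; fin_cases i <;> fin_cases j <;> simp)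
  have h2 := h !![0, 1, 0; 1, 0, 0; 0, 0, 0] (by ext i j; fin_cases i <;> fin_cases j <;> simp)
  have h3 := h !![0, 0, 1; 0, 0, 0; 1, 0, 0] (by ext i j; fin_cases i <;> fin_cases j <;> simp)
  refine ⟨u 0 0, ?_⟩
  rw [Matrix.eta_fin_three u] at h1 h2 h3
  have a1 := fun i j => congr_fun (congr_fun h1 i) j
  have a2 := fun i j => congr_fun (congr_fun h2 i) j
  have a3 := fun i j => congr_fun (congr_fun h3 i) j
  simp [LieRing.of_associative_ring_bracket, Fin.forall_fin_succ] at a1 a2 a3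
  ext i j; fin_cases i <;> fin_cases j <;> simp <;> grind

end Three

/-! ### Irreducibility of `Λ²₀` under `𝔰𝔭(6)` -/

section Irreducibility

theorem mem_sp_blocks (A B C D : Matrix (Fin 3) (Fin 3) ℂ) :
    fromBlocks A B C D ∈ Symplectic.sp (Fin 3) ℂ ↔ Bᵀ = B ∧ Cᵀ = C ∧ D = -Aᵀ := by
  rw [Symplectic.sp, mem_skewAdjointMatricesLieSubalgebra, mem_skewAdjointMatricesSubmodule]
  simp only [Matrix.IsSkewAdjoint, Matrix.IsAdjointPair, Matrix.J, fromBlocks_transpose,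
    fromBlocks_neg, fromBlocks_multiply, fromBlocks_inj]
  simp only [mul_zero, mul_one, zero_add, mul_neg, add_zero, zero_mul, neg_mul, one_mul, neg_neg,
    neg_zero,
    neg_inj]
  constructor
  · rintro ⟨h1, h2, h3, h4⟩
    exact ⟨h4, h1, h2.symm⟩
  · rintro ⟨h1, h2, rfl⟩
    simp [h1, h2]

/-- `w` is self-adjoint for the symplectic form `J`, i.e. `w` lies in `Λ²₀ ⊕ ℂ`, the complement of
`𝔰𝔭(6)` in the space of `6 × 6` matrices. -/
def IsHam (w : Matrix (Fin 3 ⊕ Fin 3) (Fin 3 ⊕ Fin 3) ℂ) : Prop :=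
  wᵀ * Matrix.J (Fin 3) ℂ = Matrix.J (Fin 3) ℂ * w

theorem isHam_blocks (A B C D : Matrix (Fin 3) (Fin 3) ℂ) :
    IsHam (fromBlocks A B C D) ↔ Bᵀ = -B ∧ Cᵀ = -C ∧ D = Aᵀ := by
  simp only [IsHam, Matrix.J, fromBlocks_transpose, fromBlocks_multiply, fromBlocks_inj]
  simp only [mul_zero, mul_one, zero_add, mul_neg, add_zero, zero_mul, neg_mul, one_mul,
    neg_inj]
  constructor
  · rintro ⟨h1, h2, h3, h4⟩
    exact ⟨neg_eq_iff_eq_neg.1 h4, h1, h2.symm⟩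
  · rintro ⟨h1, h2, rfl⟩
    simp [h1, h2]

theorem exists_blocks {n : Type*} (X : Matrix (n ⊕ n) (n ⊕ n) ℂ) :
    ∃ p q r t, X = fromBlocks p q r t :=
  ⟨_, _, _, _, (fromBlocks_toBlocks X).symm⟩

/-- `Λ²₀` is an irreducible `𝔰𝔭(6)`-module: an `𝔰𝔭(6)`-stable subspace containing `1` and a
nonscalar `J`-self-adjoint matrix contains all of them. -/
theorem ham_irred (W : Submodule ℂ (Matrix (Fin 3 ⊕ Fin 3) (Fin 3 ⊕ Fin 3) ℂ))
    (hW : ∀ N ∈ Symplectic.sp (Fin 3) ℂ, ∀ w ∈ W, ⁅N, w⁆ ∈ W) (h1 : 1 ∈ W)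
    (w : Matrix (Fin 3 ⊕ Fin 3) (Fin 3 ⊕ Fin 3) ℂ) (hw : w ∈ W) (hs : IsHam w)
    (h0 : ∀ c : ℂ, w ≠ c • 1)
    (v : Matrix (Fin 3 ⊕ Fin 3) (Fin 3 ⊕ Fin 3) ℂ) (hv : IsHam v) : v ∈ W := by
  have hE := hW _ ((mem_sp_blocks 0 1 0 0).2 (by simp))
  have hF := hW _ ((mem_sp_blocks 0 0 1 0).2 (by simp))
  obtain ⟨hc1, hc2⟩ := sl2_closed W hE hF
  have hskew : ∀ R : Matrix (Fin 3) (Fin 3) ℂ, Rᵀ = -R → ∀ u ∈ upper W, ⁅R, u⁆ ∈ upper W := by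
    intro R hR u hu
    have := hW _ ((mem_sp_blocks R 0 0 R).2 (by simp [hR])) _ hu
    rwa [lie_diag_upper] at this
  -- `J`-self-adjoint matrices decompose as `𝔰𝔩(2) ⊗ Λ²ℂ³ ⊕ 1 ⊗ Sym²ℂ³`. If `w` has no component in
  -- the first summand, then `w = 1 ⊗ A`, and bracketing with `E ⊗ S`, `S` symmetric, gives one.
  have hex : ∃ u ∈ upper W, uᵀ = -u ∧ u ≠ 0 := by
    obtain ⟨A, B, C, D, rfl⟩ := exists_blocks w
    obtain ⟨hB, hC, rfl⟩ := (isHam_blocks _ _ _ _).1 hs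
    obtain ⟨g1, g2, g3, g4⟩ := hc2 _ _ _ _ hw
    by_cases hB0 : B = 0
    swap
    · exact ⟨B, g1, hB, hB0⟩
    by_cases hC0 : C = 0
    swap
    · exact ⟨C, g2, hC, hC0⟩
    by_cases hA0 : A - Aᵀ = 0
    swap
    · exact ⟨_, g3, by simp, hA0⟩
    subst hB0 hC0
    have hA : Aᵀ = A := (sub_eq_zero.1 hA0).symm
    by_contra! hno
    obtain ⟨c, rfl⟩ := sym3_centralizer A fun S hS => by
      by_contra hSA
      refine hSA (hno ⁅S, A⁆ ?_ ?_)
      · have := hW _ ((mem_sp_blocks 0 S 0 0).2 (by simp [hS])) _ hw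
        rw [hA, LieRing.of_associative_ring_bracket, fromBlocks_multiply, fromBlocks_multiply,
          sub_eq_add_neg, fromBlocks_neg, fromBlocks_add] at this
        change fromBlocks 0 ⁅S, A⁆ 0 0 ∈ W
        rw [LieRing.of_associative_ring_bracket]
        simpa [sub_eq_add_neg] using this
      · simp [LieRing.of_associative_ring_bracket, hS, hA]
    refine h0 c ?_
    rw [← fromBlocks_one, fromBlocks_smul, hA]
    simp
  obtain ⟨u, hu, hus, hu0⟩ := hex
  have hall : ∀ x : Matrix (Fin 3) (Fin 3) ℂ, xᵀ = -x → fromBlocks 0 x 0 0 ∈ W :=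
    fun x hx => skew3_irred (upper W) hskew u hu hus hu0 x hx
  -- Bracketing `E ⊗ x` with `F ⊗ S` produces a nonscalar symmetric matrix in `diag W`.
  have hcomm : ∀ S x : Matrix (Fin 3) (Fin 3) ℂ, Sᵀ = S → xᵀ = -x → ⁅S, x⁆ ∈ diag W := by
    intro S x hS hx
    have := hW _ ((mem_sp_blocks 0 0 S 0).2 (by simp [hS])) _ (hall x hx)
    rw [LieRing.of_associative_ring_bracket, fromBlocks_multiply, fromBlocks_multiply,
          sub_eq_add_neg, fromBlocks_neg, fromBlocks_add] at this
    have := (hc2 _ _ _ _ this).2.2.2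
    change fromBlocks ⁅S, x⁆ 0 0 ⁅S, x⁆ ∈ W
    rw [LieRing.of_associative_ring_bracket]
    simpa [sub_eq_add_neg, add_comm] using this
  have hdiag : ∀ x : Matrix (Fin 3) (Fin 3) ℂ, xᵀ = x → x ∈ diag W := by
    intro x hx
    refine sym3_irred (diag W) ?_ ?_ ⁅!![(1 : ℂ), 0, 0; 0, 0, 0; 0, 0, 0],
      !![(0 : ℂ), 1, 0; -1, 0, 0; 0, 0, 0]⁆ (hcomm _ _ ?_ ?_) ?_ ?_ x hx
    · intro R hR y hy
      have := hW _ ((mem_sp_blocks R 0 0 R).2 (by simp [hR])) _ hy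
      rw [LieRing.of_associative_ring_bracket, fromBlocks_multiply, fromBlocks_multiply,
          sub_eq_add_neg, fromBlocks_neg, fromBlocks_add] at this
      change fromBlocks ⁅R, y⁆ 0 0 ⁅R, y⁆ ∈ W
      rw [LieRing.of_associative_ring_bracket]
      simpa [sub_eq_add_neg] using this
    · change fromBlocks 1 0 0 1 ∈ W
      rwa [fromBlocks_one]
    · ext i j; fin_cases i <;> fin_cases j <;> simp
    · ext i j; fin_cases i <;> fin_cases j <;> simp
    · ext i j; fin_cases i <;> fin_cases j <;> simp [LieRing.of_associative_ring_bracket]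
    · intro c hc
      have := congr_fun (congr_fun hc 0) 1
      simp [LieRing.of_associative_ring_bracket] at this
  obtain ⟨A, B, C, D, rfl⟩ := exists_blocks v
  obtain ⟨hB, hC, rfl⟩ := (isHam_blocks _ _ _ _).1 hv
  exact sl2_mem W hE hF _ _ _ _ (hall _ hB) (hall _ hC) (hall _ (by simp))
    (hdiag _ (by simp [add_comm]))

end Irreducibility

/-! ### The subalgebra `b` of type `A₁ ⊕ C₃` -/

section Chain

/-- The symmetric form on `ℂ² ⊗ ℂ⁶` that is the tensor product of the symplectic forms of the two
factors. -/
def soForm : Matrix ((Fin 3 ⊕ Fin 3) ⊕ (Fin 3 ⊕ Fin 3)) ((Fin 3 ⊕ Fin 3) ⊕ (Fin 3 ⊕ Fin 3)) ℂ :=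
  fromBlocks 0 (Matrix.J (Fin 3) ℂ) (-Matrix.J (Fin 3) ℂ) 0

/-- `𝔰𝔬(12) = (𝔰𝔩(2) ⊗ (Λ²₀ ⊕ ℂ)) ⊕ (1 ⊗ 𝔰𝔭(6))` in terms of blocks. -/
theorem mem_so_blocks (p q r t : Matrix (Fin 3 ⊕ Fin 3) (Fin 3 ⊕ Fin 3) ℂ) :
    fromBlocks p q r t ∈ skewAdjointMatricesLieSubalgebra soForm ↔
      IsHam q ∧ IsHam r ∧ IsHam (p - t) ∧ p + t ∈ Symplectic.sp (Fin 3) ℂ := by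
  rw [Symplectic.sp, mem_skewAdjointMatricesLieSubalgebra, mem_skewAdjointMatricesSubmodule,
    mem_skewAdjointMatricesLieSubalgebra, mem_skewAdjointMatricesSubmodule]
  simp only [Matrix.IsSkewAdjoint, Matrix.IsAdjointPair, IsHam, soForm,
    fromBlocks_transpose, fromBlocks_neg, fromBlocks_multiply,
    fromBlocks_inj]
  simp only [mul_zero, zero_add, mul_neg, add_zero, zero_mul, neg_mul, neg_neg, neg_zero,
    neg_inj, transpose_sub, transpose_add, sub_mul, add_mul, mul_sub, mul_add, neg_add]
  constructor
  · rintro ⟨h1, h2, h3, h4⟩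
    have h3' := neg_eq_iff_eq_neg.1 h3
    exact ⟨h4, h1, by rw [h2, h3']; abel, by rw [h2, h3']; abel⟩
  · rintro ⟨h1, h2, h3, h4⟩
    refine ⟨h2, ?_, ?_, h1⟩
    · have := congr_arg₂ (fun a b => (1 / 2 : ℂ) • (a + b)) h3 h4
      convert this using 1 <;> module
    · have := congr_arg₂ (fun a b => (1 / 2 : ℂ) • (a - b)) h3 h4
      convert this using 1 <;> module

/-- The embedding of `𝔰𝔩(2) ⊕ 𝔰𝔭(6)` in `𝔰𝔬(12)`; its range is the subalgebra `b`. -/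
noncomputable def bHom := blk (Symplectic.sp (Fin 3) ℂ).incl

theorem mem_b (X : Matrix ((Fin 3 ⊕ Fin 3) ⊕ (Fin 3 ⊕ Fin 3))
      ((Fin 3 ⊕ Fin 3) ⊕ (Fin 3 ⊕ Fin 3)) ℂ) :
    X ∈ bHom.range ↔ ∃ x y z : ℂ, ∃ k ∈ Symplectic.sp (Fin 3) ℂ,
      X = fromBlocks (x • 1 + k) (y • 1) (z • 1) (-(x • 1) + k) := by
  rw [bHom, mem_blk_range, LieSubalgebra.incl_range]

theorem isHam_smul_one (c : ℂ) : IsHam (c • 1) := by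
  simp [IsHam]

theorem b_le_so : bHom.range ≤ skewAdjointMatricesLieSubalgebra soForm := by
  intro X hX
  obtain ⟨x, y, z, k, hk, rfl⟩ := (mem_b X).1 hX
  rw [mem_so_blocks]
  refine ⟨isHam_smul_one _, isHam_smul_one _, ?_, ?_⟩
  · convert isHam_smul_one (2 * x) using 1
    module
  · convert (Symplectic.sp (Fin 3) ℂ).smul_mem (2 : ℂ) hk using 1
    module

theorem b_ne_so : bHom.range ≠ skewAdjointMatricesLieSubalgebra soForm := by
  intro h
  have h1 : fromBlocks 0 (fromBlocks (Matrix.diagonal ![1, 0, 0]) 0 0 (Matrix.diagonal ![1, 0, 0]))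
      0 0 ∈ bHom.range := by
    rw [h, mem_so_blocks]
    refine ⟨?_, ?_, ?_, ?_⟩
    · rw [isHam_blocks]; simp
    · simpa using isHam_smul_one 0
    · simpa using isHam_smul_one 0
    · simp
  obtain ⟨x, y, z, k, hk, e⟩ := (mem_b _).1 h1
  have e' := (fromBlocks_inj.1 e).2.1
  have e1 := congr_fun (congr_fun e' (Sum.inl 0)) (Sum.inl 0)
  have e2 := congr_fun (congr_fun e' (Sum.inl 1)) (Sum.inl 1)
  simp at e1 e2
  rw [← e2] at e1
  exact one_ne_zero e1

/-- `b` is maximal in `𝔰𝔬(12)`: a larger subalgebra contains a nonscalar `J`-self-adjoint matrix in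
its upper right block, hence all of `𝔰𝔩(2) ⊗ Λ²₀`. -/
theorem b_maximal (S : LieSubalgebra ℂ (Matrix ((Fin 3 ⊕ Fin 3) ⊕ (Fin 3 ⊕ Fin 3))
      ((Fin 3 ⊕ Fin 3) ⊕ (Fin 3 ⊕ Fin 3)) ℂ))
    (hb : bHom.range ≤ S) (hS : S ≤ skewAdjointMatricesLieSubalgebra soForm) :
    S = bHom.range ∨ S = skewAdjointMatricesLieSubalgebra soForm := by
  by_cases hle : S ≤ bHom.range
  · exact Or.inl (le_antisymm hle hb)
  refine Or.inr (le_antisymm hS ?_)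
  obtain ⟨X, hX, hXb⟩ := SetLike.not_le_iff_exists.1 hle
  have hE : ∀ X ∈ S.toSubmodule, ⁅fromBlocks 0 1 0 0, X⁆ ∈ S.toSubmodule := fun X hX =>
    S.lie_mem (hb ((mem_b _).2 ⟨0, 1, 0, 0, zero_mem _, by simp⟩)) hX
  have hF : ∀ X ∈ S.toSubmodule, ⁅fromBlocks 0 0 1 0, X⁆ ∈ S.toSubmodule := fun X hX =>
    S.lie_mem (hb ((mem_b _).2 ⟨0, 0, 1, 0, zero_mem _, by simp⟩)) hX
  have hdiag : ∀ k ∈ Symplectic.sp (Fin 3) ℂ, fromBlocks k 0 0 k ∈ S := fun k hk =>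
    hb ((mem_b _).2 ⟨0, 0, 0, k, hk, by simp⟩)
  obtain ⟨p, q, r, t, rfl⟩ := exists_blocks X
  obtain ⟨hq, hr, hd, hs⟩ := (mem_so_blocks _ _ _ _).1 (hS hX)
  obtain ⟨g1, g2, g3, g4⟩ := (sl2_closed S.toSubmodule hE hF).2 _ _ _ _ hX
  have hex : ∃ w ∈ upper S.toSubmodule, IsHam w ∧ ∀ c : ℂ, w ≠ c • 1 := by
    by_contra! hno
    obtain ⟨y, rfl⟩ := hno q g1 hq
    obtain ⟨z, rfl⟩ := hno r g2 hr
    obtain ⟨x, hx⟩ := hno _ g3 hd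
    refine hXb ((mem_b _).2 ⟨x / 2, y, z, (1 / 2 : ℂ) • (p + t),
      (Symplectic.sp (Fin 3) ℂ).smul_mem _ hs, ?_⟩)
    have hx' : (x / 2) • (1 : Matrix (Fin 3 ⊕ Fin 3) (Fin 3 ⊕ Fin 3) ℂ)
        = (1 / 2 : ℂ) • (p - t) := by
      rw [hx]; module
    rw [hx']
    congr 1 <;> module
  obtain ⟨w, hw, hwH, hw0⟩ := hex
  have hall : ∀ v, IsHam v → v ∈ upper S.toSubmodule := by
    refine ham_irred (upper S.toSubmodule) ?_ ?_ w hw hwH hw0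
    · intro N hN u hu
      have := S.lie_mem (hdiag N hN) hu
      rwa [lie_diag_upper] at this
    · exact hb ((mem_b _).2 ⟨0, 1, 0, 0, zero_mem _, by simp⟩)
  intro Y hY
  obtain ⟨p, q, r, t, rfl⟩ := exists_blocks Y
  obtain ⟨hq, hr, hd, hs⟩ := (mem_so_blocks _ _ _ _).1 hY
  exact sl2_mem S.toSubmodule hE hF _ _ _ _ (hall _ hq) (hall _ hr) (hall _ hd) (hdiag _ hs)

/-! ### The subalgebra `a` of type `3A₁` -/

/-- The adjoint representation of `𝔰𝔩(2)` in an orthonormal basis for a multiple of its Killing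
form, an isomorphism onto the skew-symmetric matrices `𝔰𝔬(3)`. -/
noncomputable def tauHom : ↥(SpecialLinear.sl (Fin 2) ℂ) →ₗ⁅ℂ⁆ Matrix (Fin 3) (Fin 3) ℂ where
  toFun s := !![0, -(2 * Complex.I * s.1 0 0), s.1 1 0 - s.1 0 1;
    2 * Complex.I * s.1 0 0, 0, -(Complex.I * (s.1 0 1 + s.1 1 0));
    -(s.1 1 0 - s.1 0 1), Complex.I * (s.1 0 1 + s.1 1 0), 0]
  map_add' := by
    rintro ⟨s, hs⟩ ⟨t, ht⟩
    ext i j; fin_cases i <;> fin_cases j <;> simp <;> ring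
  map_smul' := by
    rintro c ⟨s, hs⟩
    ext i j; fin_cases i <;> fin_cases j <;> simp <;> ring
  map_lie' := by
    rintro ⟨s, hs⟩ ⟨t, ht⟩
    have hs' : s 1 1 = - s 0 0 := by
      have : Matrix.trace s = 0 := hs
      rw [Matrix.trace_fin_two] at this
      linear_combination this
    have ht' : t 1 1 = - t 0 0 := by
      have : Matrix.trace t = 0 := ht
      rw [Matrix.trace_fin_two] at this
      linear_combination this
    have hst : ∀ i j, (⁅(⟨s, hs⟩ : SpecialLinear.sl (Fin 2) ℂ),
        (⟨t, ht⟩ : SpecialLinear.sl (Fin 2) ℂ)⁆).1 i j =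
        s i 0 * t 0 j + s i 1 * t 1 j - (t i 0 * s 0 j + t i 1 * s 1 j) := by
      intro i j
      rw [SpecialLinear.sl_bracket]
      simp [Matrix.mul_apply, Fin.sum_univ_two]
    simp only [hst, hs', ht']
    have hI := Complex.I_sq
    ext i j; fin_cases i <;> fin_cases j <;>
      simp [LieRing.of_associative_ring_bracket] <;> grind

theorem mem_tau (A : Matrix (Fin 3) (Fin 3) ℂ) : A ∈ tauHom.range ↔ Aᵀ = -A := by
  constructor
  · rintro ⟨s, rfl⟩
    ext i j; fin_cases i <;> fin_cases j <;> simp [tauHom]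
  · intro h
    have e : ∀ i j, A j i = - A i j := fun i j => congr_fun (congr_fun h i) j
    have d : ∀ i, A i i = 0 := fun i => self_eq_neg.1 (e i i)
    have hs : !![-Complex.I / 2 * A 1 0, (-Complex.I * A 2 1 - A 0 2) / 2;
        (-Complex.I * A 2 1 + A 0 2) / 2, Complex.I / 2 * A 1 0] ∈ SpecialLinear.sl (Fin 2) ℂ := by
      change Matrix.trace (n := Fin 2) _ = 0
      rw [Matrix.trace_fin_two]
      simp
      ring
    refine ⟨⟨_, hs⟩, ?_⟩
    have hI := Complex.I_sq
    have e1 := e 0 1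
    have e2 := e 0 2
    have e3 := e 1 2
    ext i j; fin_cases i <;> fin_cases j <;> simp [tauHom, d] <;> grind

theorem tau_injective : Function.Injective tauHom := by
  rw [injective_iff_map_eq_zero]
  rintro ⟨s, hs⟩ h
  have ht : Matrix.trace s = 0 := hs
  rw [Matrix.trace_fin_two] at ht
  have h1 := congr_fun (congr_fun h 1) 0
  have h2 := congr_fun (congr_fun h 0) 2
  have h3 := congr_fun (congr_fun h 2) 1
  simp [tauHom] at h1 h2 h3
  have : s = 0 := by
    ext i j; fin_cases i <;> fin_cases j <;> simp <;> grind
  subst this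
  rfl

/-- The embedding of `𝔰𝔩(2) ⊕ 𝔰𝔩(2) ⊕ 𝔰𝔩(2)` in `𝔰𝔬(12)` for `ℂ¹² = ℂ² ⊗ ℂ² ⊗ ℂ³`; its range is the
subalgebra `a`. -/
noncomputable def aHom := blk (blk tauHom)

theorem mem_a (X : Matrix ((Fin 3 ⊕ Fin 3) ⊕ (Fin 3 ⊕ Fin 3))
      ((Fin 3 ⊕ Fin 3) ⊕ (Fin 3 ⊕ Fin 3)) ℂ) :
    X ∈ aHom.range ↔ ∃ x y z : ℂ, ∃ k ∈ (blk tauHom).range,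
      X = fromBlocks (x • 1 + k) (y • 1) (z • 1) (-(x • 1) + k) :=
  mem_blk_range _ X

theorem mem_blk_tau (X : Matrix (Fin 3 ⊕ Fin 3) (Fin 3 ⊕ Fin 3) ℂ) :
    X ∈ (blk tauHom).range ↔ ∃ x y z : ℂ, ∃ k : Matrix (Fin 3) (Fin 3) ℂ, kᵀ = -k ∧
      X = fromBlocks (x • 1 + k) (y • 1) (z • 1) (-(x • 1) + k) := by
  simp only [mem_blk_range, mem_tau]

theorem blk_tau_le_sp : (blk tauHom).range ≤ Symplectic.sp (Fin 3) ℂ := by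
  intro X hX
  obtain ⟨x, y, z, k, hk, rfl⟩ := (mem_blk_tau X).1 hX
  rw [mem_sp_blocks]
  simp [hk, add_comm]

theorem a_le_b : aHom.range ≤ bHom.range := by
  intro X hX
  obtain ⟨x, y, z, k, hk, rfl⟩ := (mem_a X).1 hX
  exact (mem_b _).2 ⟨x, y, z, k, blk_tau_le_sp hk, rfl⟩

theorem a_ne_b : aHom.range ≠ bHom.range := by
  intro h
  have h1 : fromBlocks (fromBlocks 0 (Matrix.diagonal ![1, 0, 0]) 0 0) 0 0
      (fromBlocks 0 (Matrix.diagonal ![1, 0, 0]) 0 0) ∈ aHom.range := by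
    rw [h, mem_b]
    exact ⟨0, 0, 0, _, (mem_sp_blocks 0 (Matrix.diagonal ![1, 0, 0]) 0 0).2 (by simp), by simp⟩
  obtain ⟨x, y, z, k, hk, e⟩ := (mem_a _).1 h1
  obtain ⟨x', y', z', k', hk', rfl⟩ := (mem_blk_tau _).1 hk
  have e' := (fromBlocks_inj.1 e).1
  have e1 := congr_fun (congr_fun e' (Sum.inl 0)) (Sum.inr 0)
  have e2 := congr_fun (congr_fun e' (Sum.inl 1)) (Sum.inr 1)
  simp at e1 e2
  rw [← e2] at e1
  exact one_ne_zero e1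

/-- `a` is maximal in `b`. Since `S` contains the outer `𝔰𝔩(2)`, it is determined by `diag S`, which
lies between `𝔰𝔩(2) ⊕ 𝔰𝔬(3)` and `𝔰𝔭(6)`. -/
theorem a_maximal (S : LieSubalgebra ℂ (Matrix ((Fin 3 ⊕ Fin 3) ⊕ (Fin 3 ⊕ Fin 3))
      ((Fin 3 ⊕ Fin 3) ⊕ (Fin 3 ⊕ Fin 3)) ℂ))
    (ha : aHom.range ≤ S) (hS : S ≤ bHom.range) :
    S = aHom.range ∨ S = bHom.range := by
  by_cases hle : S ≤ aHom.range
  · exact Or.inl (le_antisymm hle ha)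
  refine Or.inr (le_antisymm hS ?_)
  obtain ⟨X, hX, hXa⟩ := SetLike.not_le_iff_exists.1 hle
  obtain ⟨x, y, z, N, hN, rfl⟩ := (mem_b X).1 (hS hX)
  have hbase : ∀ x y z : ℂ, fromBlocks (x • 1) (y • 1) (z • 1) (-(x • 1)) ∈ S := fun x y z =>
    ha ((mem_a _).2 ⟨x, y, z, 0, zero_mem _, by simp⟩)
  have hNS : N ∈ diag S.toSubmodule := by
    have := S.sub_mem hX (hbase x y z)
    rw [sub_eq_add_neg, fromBlocks_neg, fromBlocks_add] at this
    change fromBlocks N 0 0 N ∈ S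
    convert this using 2 <;> module
  have hNa : N ∉ (blk tauHom).range := fun h => hXa ((mem_a _).2 ⟨x, y, z, N, h, rfl⟩)
  have hD : ∀ k ∈ (blk tauHom).range, k ∈ diag S.toSubmodule := fun k hk =>
    ha ((mem_a _).2 ⟨0, 0, 0, k, hk, by simp⟩)
  have hlie : ∀ k ∈ (blk tauHom).range, ∀ w ∈ diag S.toSubmodule, ⁅k, w⁆ ∈ diag S.toSubmodule := by
    intro k hk w hw
    have := S.lie_mem (hD k hk) hw
    rw [lie_diag_diag] at this
    exact this
  have hE := hlie (fromBlocks 0 1 0 0) ((mem_blk_tau _).2 ⟨0, 1, 0, 0, by simp, by simp⟩)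
  have hF := hlie (fromBlocks 0 0 1 0) ((mem_blk_tau _).2 ⟨0, 0, 1, 0, by simp, by simp⟩)
  have hk : ∀ k : Matrix (Fin 3) (Fin 3) ℂ, kᵀ = -k → fromBlocks k 0 0 k ∈ (blk tauHom).range :=
    fun k hk => (mem_blk_tau _).2 ⟨0, 0, 0, k, hk, by simp⟩
  have hex : ∃ u ∈ upper (diag S.toSubmodule), uᵀ = u ∧ ∀ c : ℂ, u ≠ c • 1 := by
    by_contra! hno
    obtain ⟨A, B, C, D, rfl⟩ := exists_blocks N
    obtain ⟨hB, hC, rfl⟩ := (mem_sp_blocks _ _ _ _).1 hN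
    obtain ⟨g1, g2, g3, g4⟩ := (sl2_closed _ hE hF).2 _ _ _ _ hNS
    obtain ⟨y, rfl⟩ := hno B g1 hB
    obtain ⟨z, rfl⟩ := hno C g2 hC
    obtain ⟨x, hx⟩ := hno _ g3 (by simp [add_comm])
    refine hNa ((mem_blk_tau _).2 ⟨x / 2, y, z, (1 / 2 : ℂ) • (A - Aᵀ), ?_, ?_⟩)
    · rw [transpose_smul, transpose_sub, transpose_transpose]; module
    have hx' : (x / 2) • (1 : Matrix (Fin 3) (Fin 3) ℂ) = (1 / 2 : ℂ) • (A - -Aᵀ) := by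
      rw [hx]; module
    rw [hx']
    congr 1 <;> module
  obtain ⟨u, hu, hus, hu0⟩ := hex
  have hall : ∀ v : Matrix (Fin 3) (Fin 3) ℂ, vᵀ = v → v ∈ upper (diag S.toSubmodule) := by
    refine fun v hv => sym3_irred (upper (diag S.toSubmodule)) ?_ ?_ u hu hus hu0 v hv
    · intro R hR w hw
      have := hlie _ (hk R hR) _ hw
      rwa [lie_diag_upper] at this
    · exact hD _ ((mem_blk_tau _).2 ⟨0, 1, 0, 0, by simp, by simp⟩)
  intro Y hY
  obtain ⟨x, y, z, M, hM, rfl⟩ := (mem_b Y).1 hY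
  have hMD : fromBlocks M 0 0 M ∈ S := by
    obtain ⟨A, B, C, D, rfl⟩ := exists_blocks M
    obtain ⟨hB, hC, rfl⟩ := (mem_sp_blocks _ _ _ _).1 hM
    exact sl2_mem (diag S.toSubmodule) hE hF _ _ _ _ (hall _ hB) (hall _ hC)
      (hall _ (by simp [add_comm])) (hD _ (hk _ (by simp)))
  have := S.add_mem (hbase x y z) hMD
  rw [fromBlocks_add] at this
  simpa using this

/-! ### Transport to `𝔰𝔬(12)` -/

/-- Over `ℂ` the forms `1` and `soForm` are congruent. -/
theorem soForm_equiv : Nonempty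
    (↥(Orthogonal.so (Fin 12) ℂ) ≃ₗ⁅ℂ⁆ ↥(skewAdjointMatricesLieSubalgebra soForm)) := by
  let e : Fin 12 ≃ (Fin 3 ⊕ Fin 3) ⊕ (Fin 3 ⊕ Fin 3) := Fintype.equivOfCardEq (by simp)
  have e1 := skewAdjointMatricesLieSubalgebraEquivTranspose (1 : Matrix (Fin 12) (Fin 12) ℂ)
    (Matrix.reindexAlgEquiv ℂ ℂ e) (fun A => by simp)
  rw [map_one] at e1
  have hB2 : soForm * soForm = 1 := by
    simp [soForm, fromBlocks_multiply, Matrix.J_squared]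
  have hBt : soFormᵀ = soForm := by
    simp [soForm, fromBlocks_transpose, Matrix.J_transpose]
  -- `soForm` is an involution; its square root `P` acts as `1` and `i` on the eigenspaces of
  -- `soForm` for the eigenvalues `1` and `-1`.
  let P : Matrix ((Fin 3 ⊕ Fin 3) ⊕ (Fin 3 ⊕ Fin 3)) ((Fin 3 ⊕ Fin 3) ⊕ (Fin 3 ⊕ Fin 3)) ℂ :=
    ((1 + Complex.I) / 2) • 1 + ((1 - Complex.I) / 2) • soForm
  have hPt : Pᵀ = P := by simp [P, hBt]
  have hPP : P * P = soForm := by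
    have hI := Complex.I_sq
    have h1 : (1 + Complex.I) / 2 * ((1 + Complex.I) / 2)
      + (1 - Complex.I) / 2 * ((1 - Complex.I) / 2) = 0 := by linear_combination hI / 2
    have h2 : (1 - Complex.I) / 2 * ((1 + Complex.I) / 2)
      + (1 + Complex.I) / 2 * ((1 - Complex.I) / 2) = 1 := by linear_combination -hI / 2
    have h3 : ∀ c d : ℂ, (c • 1 + d • soForm) * (c • 1 + d • soForm)
        = (c * c + d * d) • 1 + (d * c + c * d) • soForm := by
      intro c d
      simp only [mul_add, add_mul, smul_mul_assoc, mul_smul_comm, one_mul, mul_one, hB2]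
      module
    rw [h3, h1, h2, zero_smul, one_smul, zero_add]
  have hinv : Invertible P := invertibleOfRightInverse P (P * soForm) (by
    rw [← mul_assoc, hPP, hB2])
  have e2 := skewAdjointMatricesLieSubalgebraEquiv 1 P hinv
  rw [mul_one, hPt, hPP] at e2
  exact ⟨e1.trans e2⟩

end Chain

theorem threeA1_in_so12_not_maximal :
    ∃ a b : LieSubalgebra ℂ ↥(Orthogonal.so (Fin 12) ℂ),
      -- a is of type A₁ ⊕ A₁ ⊕ A₁:
      Nonempty (a ≃ₗ⁅ℂ⁆
        (↥(SpecialLinear.sl (Fin 2) ℂ) × ↥(SpecialLinear.sl (Fin 2) ℂ) ×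
          ↥(SpecialLinear.sl (Fin 2) ℂ))) ∧
      -- b is of type A₁ ⊕ C₃, i.e. 𝔰𝔩(2,ℂ) ⊕ 𝔰𝔭(6,ℂ):
      Nonempty (b ≃ₗ⁅ℂ⁆
        (↥(SpecialLinear.sl (Fin 2) ℂ) × ↥(Symplectic.sp (Fin 3) ℂ))) ∧
      -- the chain of proper inclusions:
      a < b ∧ b < ⊤ ∧
      -- a is maximal in b:
      (∀ s : LieSubalgebra ℂ ↥(Orthogonal.so (Fin 12) ℂ), a ≤ s → s ≤ b → s = a ∨ s = b) ∧
      -- b is maximal in 𝔰𝔬(12,ℂ):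
      IsMaxSubalgebra b ∧
      -- a is not maximal in 𝔰𝔬(12,ℂ):
      ¬ IsMaxSubalgebra a := by
  -- `g` identifies `𝔰𝔬(12)` with the skew-adjoint matrices for `soForm`; subalgebras on the two
  -- sides correspond through `map g` and `comap g`.
  obtain ⟨e⟩ := soForm_equiv
  let g := (skewAdjointMatricesLieSubalgebra soForm).incl.comp e.toLieHom
  have hg : Function.Injective g := Subtype.val_injective.comp e.injective
  have hgr : ∀ Y, Y ∈ skewAdjointMatricesLieSubalgebra soForm ↔ ∃ x, g x = Y := by
    intro Y
    constructor
    · intro hY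
      exact ⟨e.symm ⟨Y, hY⟩, by simp [g]⟩
    · rintro ⟨x, rfl⟩
      exact (e x).2
  have hmapcomap : ∀ T ≤ skewAdjointMatricesLieSubalgebra soForm, (T.comap g).map g = T := by
    intro T hT
    ext Y
    simp only [LieSubalgebra.mem_map, LieSubalgebra.mem_comap]
    constructor
    · rintro ⟨x, hx, rfl⟩; exact hx
    · intro hY
      obtain ⟨x, rfl⟩ := (hgr Y).1 (hT hY)
      exact ⟨x, hY, rfl⟩
  have hcomapmap : ∀ s : LieSubalgebra ℂ ↥(Orthogonal.so (Fin 12) ℂ), (s.map g).comap g = s := by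
    intro s
    ext x
    simp only [LieSubalgebra.mem_map, LieSubalgebra.mem_comap]
    constructor
    · rintro ⟨y, hy, hxy⟩; rwa [← hg hxy]
    · intro hx; exact ⟨x, hx, rfl⟩
  have hmaple : ∀ s : LieSubalgebra ℂ ↥(Orthogonal.so (Fin 12) ℂ),
      s.map g ≤ skewAdjointMatricesLieSubalgebra soForm := by
    rintro s _ ⟨x, hx, rfl⟩
    exact (hgr _).2 ⟨x, rfl⟩
  have htop : (skewAdjointMatricesLieSubalgebra soForm).comap g = ⊤ := by
    ext x
    simpa using (hgr _).2 ⟨x, rfl⟩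
  have hmono : ∀ s t : LieSubalgebra ℂ ↥(Orthogonal.so (Fin 12) ℂ), s ≤ t → s.map g ≤ t.map g := by
    rintro s t h _ ⟨x, hx, rfl⟩
    exact ⟨x, h hx, rfl⟩
  have hiso : ∀ T ≤ skewAdjointMatricesLieSubalgebra soForm, Nonempty (T.comap g ≃ₗ⁅ℂ⁆ T) := by
    intro T hT
    let f := g.comp (T.comap g).incl
    have hf : f.range = T := by
      conv_rhs => rw [← hmapcomap T hT]
      ext Y
      simp only [LieHom.mem_range, LieSubalgebra.mem_map]
      constructor
      · rintro ⟨x, rfl⟩; exact ⟨x.1, x.2, rfl⟩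
      · rintro ⟨x, hx, rfl⟩; exact ⟨⟨x, hx⟩, rfl⟩
    exact ⟨(LieEquiv.ofInjective f (hg.comp Subtype.val_injective)).trans
      (LieEquiv.ofEq _ _ (by rw [hf]))⟩
  have hinj : ∀ T ≤ skewAdjointMatricesLieSubalgebra soForm,
      ∀ T' ≤ skewAdjointMatricesLieSubalgebra soForm, T ≠ T' → T.comap g ≠ T'.comap g := by
    intro T hT T' hT' hne h
    exact hne (by rw [← hmapcomap T hT, h, hmapcomap T' hT'])
  have hale := a_le_b.trans b_le_so
  have hab : aHom.range.comap g < bHom.range.comap g :=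
    lt_of_le_of_ne (fun x hx => a_le_b hx) (hinj _ hale _ b_le_so a_ne_b)
  have hbtop : bHom.range.comap g ≠ ⊤ := by
    rw [← htop]
    exact hinj _ b_le_so _ le_rfl b_ne_so
  refine ⟨aHom.range.comap g, bHom.range.comap g, ?_, ?_, hab, lt_top_iff_ne_top.2 hbtop,
    ?_, ⟨hbtop, ?_⟩, fun h => hab.ne' (h.2 _ hbtop hab.le)⟩
  · obtain ⟨i⟩ := hiso _ hale
    exact ⟨i.trans (LieEquiv.ofInjective aHom
      (blk_injective _ (blk_injective _ tau_injective))).symm⟩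
  · obtain ⟨i⟩ := hiso _ b_le_so
    exact ⟨i.trans (LieEquiv.ofInjective bHom (blk_injective _ Subtype.val_injective)).symm⟩
  · intro s hs1 hs2
    have h1 := hmono _ _ hs1
    have h2 := hmono _ _ hs2
    rw [hmapcomap _ hale] at h1
    rw [hmapcomap _ b_le_so] at h2
    rw [← hcomapmap s]
    exact (a_maximal _ h1 h2).imp (fun h => by rw [h]) (fun h => by rw [h])
  · intro s hs hbs
    have h1 := hmono _ _ hbs
    rw [hmapcomap _ b_le_so] at h1
    rw [← hcomapmap s]
    rcases b_maximal _ h1 (hmaple s) with h | h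
    · rw [h]
    · exact absurd (by rw [← hcomapmap s, h, htop]) hs
end

section
/- The 14-dimensional irreducible representation Λ³₀ ℂ⁶ of 𝔰𝔭(6,ℂ) (the third fundamental representation, the kernel of contraction with the symplectic form on Λ³ℂ⁶) carries an invariant nondegenerate skew-symmetric bilinear form; the resulting embedding of 𝔰𝔭(6,ℂ) into 𝔰𝔭(14,ℂ) makes 𝔰𝔭(6,ℂ) a maximal subalgebra of 𝔰𝔭(14,ℂ), and an S-subalgebra (it is contained in no proper regular subalgebra of 𝔰𝔭(14,ℂ)). -/
/-!
STATEMENT 8: The 14-dimensional irreducible representation Λ³₀ℂ⁶ of 𝔰𝔭(6,ℂ) carries an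
invariant nondegenerate skew-symmetric bilinear form; the resulting embedding of 𝔰𝔭(6,ℂ) into
𝔰𝔭(14,ℂ) makes 𝔰𝔭(6,ℂ) a maximal subalgebra of 𝔰𝔭(14,ℂ), and an S-subalgebra (it is contained
in no proper regular subalgebra of 𝔰𝔭(14,ℂ)).

The existence of the invariant symplectic form on the 14-dimensional irreducible module is
expressed by the existence of an injective Lie algebra morphism 𝔰𝔭(6,ℂ) → 𝔰𝔭(14,ℂ) whose
image acts irreducibly on the standard 14-dimensional (symplectic) module.
-/

/-!
The module `Λ³₀ℂ⁶` is built by hand. Write `ℂ⁶ = L ⊕ L'` with `L`, `L'` Lagrangian, so that an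
element of `𝔰𝔭(6, ℂ)` is a block matrix `(A, B; C, -Aᵀ)` with `B`, `C` symmetric; then
`Λ³₀ℂ⁶ = ℂ ⊕ Sym² ⊕ Sym² ⊕ ℂ` as a module over the Levi subalgebra `𝔤𝔩(3, ℂ)`. The formulas
`actFun` give the action in coordinates in which the invariant symplectic form is the standard one
on `ℂ¹⁴`; that they define a representation is the polynomial identity `act_lie`. This gives
`phi : 𝔰𝔭(6, ℂ) → 𝔰𝔭(14, ℂ)`.

*Irreducibility.* The grading element `h0` of `𝔰𝔭(6, ℂ)` acts on `ℂ¹⁴` with eigenvalues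
`3, 1, -1, -3`, the extreme ones being simple, with eigenvectors `e0` and `f0`. A submodule whose
elements all have zero `f0`-coordinate has `e0` in its symplectic orthogonal, and `e0` generates
the whole module; otherwise the submodule contains `f0`, which generates as well.

*Maximality.* As a module `𝔰𝔭(14, ℂ)` is `Sym² ℂ¹⁴`, through the products `Bl u w`. It is the sum
of the image of `𝔰𝔭(6, ℂ)` and of the irreducible module generated by the highest weight vector
`Bl e0 e0`; only one consequence of this decomposition is needed, `generation`: a submodule that
contains the image and `Bl e0 e0` is everything. Let `s` be a subalgebra containing the image. If
`Bl e0 e0 ∈ s` then `s = ⊤`. If not, then `s` has no component along the lowest weight vector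
`Bl f0 f0` (`Bl_f0_mem`, `raise`), so `Bl e0 e0` lies in the orthogonal `T` of `s` for the trace
form. By `generation`, `T` and the image together span everything, and the nondegeneracy of the
trace form leaves no room for `s` to exceed the image (`eq_range`).

*The S-property.* By maximality a proper regular subalgebra containing the image `m` equals `m`,
and `m` is its own normalizer, so some Cartan subalgebra `H` of `𝔰𝔭(14, ℂ)` would lie in `m`. A
generic `x ∈ H` satisfies `𝔰𝔭(14, ℂ) = H + [x, 𝔰𝔭(14, ℂ)]` (`exists_cartan_regular`), so `ad x` is
surjective, hence bijective, on `𝔰𝔭(14, ℂ) ⧸ m`. But `ad x` is singular there for every `x ∈ m`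
(`singular`): the cube of an element of `𝔰𝔭(14, ℂ)` is an element of `𝔰𝔭(14, ℂ)` commuting with
it, and the cube of a generic element of `m` is not in `m`.
-/

open LieAlgebra

/-- A Lie subalgebra is *regular* if it is normalized by some Cartan subalgebra. -/
def LieSubalgebra.IsRegularSubalgebra {K L : Type*} [Field K] [LieRing L] [LieAlgebra K L]
    (r : LieSubalgebra K L) : Prop :=
  ∃ H : LieSubalgebra K L, H.IsCartanSubalgebra ∧ ∀ x ∈ H, ∀ y ∈ r, ⁅x, y⁆ ∈ r

namespace Sp6Sp14

open Matrix

/-! ### The 14-dimensional module -/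

/-- The blocks of an element of `𝔰𝔭(6, ℂ)`. -/
abbrev M3 := Matrix (Fin 3) (Fin 3) ℂ

/-- The index set of the standard basis of `ℂ¹⁴`. -/
abbrev Ix := Fin 7 ⊕ Fin 7

/-- The model of `Λ³₀ℂ⁶`. With `p₀, p₁, p₂` and `q₀, q₁, q₂` a symplectic basis of `ℂ⁶`, the
coordinates of a vector are `α = v (.inl 0)` on `p₀ ∧ p₁ ∧ p₂`, `mᵢ = v (.inl (mI i))` on the weight
line of `pⱼ ∧ pₖ ∧ qᵢ`, `sᵢ = v (.inl (sI i))` on that of `pᵢ ∧ (pⱼ ∧ qⱼ - pₖ ∧ qₖ)`, where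
`{i, j, k} = {0, 1, 2}`, and `β, nᵢ, tᵢ` at the `.inr` indices on the dual weight lines. -/
abbrev V := Ix → ℂ

/-- The three positions of the coordinates `m` (and `n`). -/
def mI : Fin 3 → Fin 7 := ![1, 2, 3]

/-- The three positions of the coordinates `s` (and `t`). -/
def sI : Fin 3 → Fin 7 := ![4, 5, 6]

/-- The vector with given coordinates. -/
def mk (α : ℂ) (m s : Fin 3 → ℂ) (β : ℂ) (n t : Fin 3 → ℂ) : V :=
  Sum.elim ![α, m 0, m 1, m 2, s 0, s 1, s 2] ![β, n 0, n 1, n 2, t 0, t 1, t 2]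

/-- The action of the block matrix `(A, B; C, -Aᵀ)`, with `B` and `C` symmetric, on `Λ³₀ℂ⁶`.
Indices are taken modulo `3`. The basis of each weight line is scaled so that the invariant
symplectic form is the standard one. -/
noncomputable def actFun (A B C : M3) (v : V) : V :=
  let α := v (.inl 0)
  let m := fun i => v (.inl (mI i))
  let s := fun i => v (.inl (sI i))
  let β := v (.inr 0)
  let n := fun i => v (.inr (mI i))
  let t := fun i => v (.inr (sI i))
  let τ := A 0 0 + A 1 1 + A 2 2
  mk
    (τ * α + B 0 0 * m 0 + B 1 1 * m 1 + B 2 2 * m 2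
      + 2 * (B 1 2 * s 0 + B 2 0 * s 1 + B 0 1 * s 2))
    (fun i => C i i * α + (τ - 2 * A i i) * m i
      - 2 * (A (i + 1) i * s (i + 2) + A (i + 2) i * s (i + 1))
      - (B (i + 1) (i + 1) * n (i + 2) + B (i + 2) (i + 2) * n (i + 1))
      + B (i + 1) (i + 2) * t i)
    (fun i => C (i + 1) (i + 2) * α + A i i * s i
      - A (i + 2) (i + 1) * m (i + 2) - A (i + 1) (i + 2) * m (i + 1)
      - A i (i + 1) * s (i + 1) - A i (i + 2) * s (i + 2)
      + B (i + 1) (i + 2) * n i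
      + (B i i * t i - B i (i + 1) * t (i + 1) - B i (i + 2) * t (i + 2)) / 2)
    (-τ * β - (C 0 0 * n 0 + C 1 1 * n 1 + C 2 2 * n 2)
      - (C 1 2 * t 0 + C 2 0 * t 1 + C 0 1 * t 2))
    (fun i => -B i i * β - (τ - 2 * A i i) * n i
      + A i (i + 1) * t (i + 2) + A i (i + 2) * t (i + 1)
      - (C (i + 1) (i + 1) * m (i + 2) + C (i + 2) (i + 2) * m (i + 1))
      + 2 * C (i + 1) (i + 2) * s i)
    (fun i => -2 * B (i + 1) (i + 2) * β - A i i * t i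
      + 2 * (A (i + 2) (i + 1) * n (i + 1) + A (i + 1) (i + 2) * n (i + 2))
      + A (i + 1) i * t (i + 1) + A (i + 2) i * t (i + 2)
      + 2 * (C (i + 1) (i + 2) * m i + C i i * s i
        - C i (i + 1) * s (i + 1) - C i (i + 2) * s (i + 2)))

lemma mk_add (α m s β n t α' m' s' β' n' t') :
    mk α m s β n t + mk α' m' s' β' n' t' =
      mk (α + α') (m + m') (s + s') (β + β') (n + n') (t + t') := by
  ext (i | i) <;> fin_cases i <;> rfl

lemma mk_smul (c : ℂ) (α m s β n t) :
    c • mk α m s β n t = mk (c * α) (c • m) (c • s) (c * β) (c • n) (c • t) := by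
  ext (i | i) <;> fin_cases i <;> rfl

lemma mk_inl_zero (α m s β n t) : mk α m s β n t (.inl 0) = α := rfl

lemma mk_inr_zero (α m s β n t) : mk α m s β n t (.inr 0) = β := rfl

lemma mk_inl_mI (α m s β n t i) : mk α m s β n t (.inl (mI i)) = m i := by
  fin_cases i <;> rfl

lemma mk_inl_sI (α m s β n t i) : mk α m s β n t (.inl (sI i)) = s i := by
  fin_cases i <;> rfl

lemma mk_inr_mI (α m s β n t i) : mk α m s β n t (.inr (mI i)) = n i := by
  fin_cases i <;> rfl

lemma mk_inr_sI (α m s β n t i) : mk α m s β n t (.inr (sI i)) = t i := by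
  fin_cases i <;> rfl

lemma V_ext {u w : V} (h₀ : u (.inl 0) = w (.inl 0)) (hm : ∀ i, u (.inl (mI i)) = w (.inl (mI i)))
    (hs : ∀ i, u (.inl (sI i)) = w (.inl (sI i))) (h₀' : u (.inr 0) = w (.inr 0))
    (hm' : ∀ i, u (.inr (mI i)) = w (.inr (mI i)))
    (hs' : ∀ i, u (.inr (sI i)) = w (.inr (sI i))) : u = w := by
  ext (i | i)
  · fin_cases i
    exacts [h₀, hm 0, hm 1, hm 2, hs 0, hs 1, hs 2]
  · fin_cases i
    exacts [h₀', hm' 0, hm' 1, hm' 2, hs' 0, hs' 1, hs' 2]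

/-- `actFun` as a linear map. -/
noncomputable def act (A B C : M3) : V →ₗ[ℂ] V where
  toFun := actFun A B C
  map_add' u w := by
    simp only [actFun, mk_add, Pi.add_apply]
    congr 1 <;> first | (funext i; simp only [Pi.add_apply]; ring) | ring
  map_smul' c u := by
    simp only [actFun, mk_smul, Pi.smul_apply, smul_eq_mul, RingHom.id_apply]
    congr 1 <;> first | (funext i; simp only [Pi.smul_apply, smul_eq_mul]; ring) | ring

lemma act_apply (A B C : M3) (v : V) : act A B C v = actFun A B C v := rfl

lemma act_inl_mI (A B C : M3) (v : V) (i : Fin 3) : act A B C v (.inl (mI i)) =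
    C i i * v (.inl 0) + (A 0 0 + A 1 1 + A 2 2 - 2 * A i i) * v (.inl (mI i))
      - 2 * (A (i + 1) i * v (.inl (sI (i + 2))) + A (i + 2) i * v (.inl (sI (i + 1))))
      - (B (i + 1) (i + 1) * v (.inr (mI (i + 2))) + B (i + 2) (i + 2) * v (.inr (mI (i + 1))))
      + B (i + 1) (i + 2) * v (.inr (sI i)) := by
  rw [act_apply, actFun, mk_inl_mI]

lemma act_inl_sI (A B C : M3) (v : V) (i : Fin 3) : act A B C v (.inl (sI i)) =
    C (i + 1) (i + 2) * v (.inl 0) + A i i * v (.inl (sI i))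
      - A (i + 2) (i + 1) * v (.inl (mI (i + 2))) - A (i + 1) (i + 2) * v (.inl (mI (i + 1)))
      - A i (i + 1) * v (.inl (sI (i + 1))) - A i (i + 2) * v (.inl (sI (i + 2)))
      + B (i + 1) (i + 2) * v (.inr (mI i))
      + (B i i * v (.inr (sI i)) - B i (i + 1) * v (.inr (sI (i + 1)))
        - B i (i + 2) * v (.inr (sI (i + 2)))) / 2 := by
  rw [act_apply, actFun, mk_inl_sI]

lemma act_inr_mI (A B C : M3) (v : V) (i : Fin 3) : act A B C v (.inr (mI i)) =
    -B i i * v (.inr 0) - (A 0 0 + A 1 1 + A 2 2 - 2 * A i i) * v (.inr (mI i))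
      + A i (i + 1) * v (.inr (sI (i + 2))) + A i (i + 2) * v (.inr (sI (i + 1)))
      - (C (i + 1) (i + 1) * v (.inl (mI (i + 2))) + C (i + 2) (i + 2) * v (.inl (mI (i + 1))))
      + 2 * C (i + 1) (i + 2) * v (.inl (sI i)) := by
  rw [act_apply, actFun, mk_inr_mI]

lemma act_inr_sI (A B C : M3) (v : V) (i : Fin 3) : act A B C v (.inr (sI i)) =
    -2 * B (i + 1) (i + 2) * v (.inr 0) - A i i * v (.inr (sI i))
      + 2 * (A (i + 2) (i + 1) * v (.inr (mI (i + 1))) + A (i + 1) (i + 2) * v (.inr (mI (i + 2))))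
      + A (i + 1) i * v (.inr (sI (i + 1))) + A (i + 2) i * v (.inr (sI (i + 2)))
      + 2 * (C (i + 1) (i + 2) * v (.inl (mI i)) + C i i * v (.inl (sI i))
        - C i (i + 1) * v (.inl (sI (i + 1))) - C i (i + 2) * v (.inl (sI (i + 2)))) := by
  rw [act_apply, actFun, mk_inr_sI]

lemma act_inl_zero (A B C : M3) (v : V) : act A B C v (.inl 0) =
    (A 0 0 + A 1 1 + A 2 2) * v (.inl 0) + B 0 0 * v (.inl (mI 0)) + B 1 1 * v (.inl (mI 1))
      + B 2 2 * v (.inl (mI 2))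
      + 2 * (B 1 2 * v (.inl (sI 0)) + B 2 0 * v (.inl (sI 1)) + B 0 1 * v (.inl (sI 2))) := rfl

lemma act_inr_zero (A B C : M3) (v : V) : act A B C v (.inr 0) =
    -(A 0 0 + A 1 1 + A 2 2) * v (.inr 0)
      - (C 0 0 * v (.inr (mI 0)) + C 1 1 * v (.inr (mI 1)) + C 2 2 * v (.inr (mI 2)))
      - (C 1 2 * v (.inr (sI 0)) + C 2 0 * v (.inr (sI 1)) + C 0 1 * v (.inr (sI 2))) := rfl

lemma forall_fin3 {p : Fin 3 → Prop} (h₀ : p 0) (h₁ : p 1) (h₂ : p 2) : ∀ i, p i := by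
  intro i
  fin_cases i
  exacts [h₀, h₁, h₂]

lemma fin3_add : ((0 : Fin 3) + 1 = 1 ∧ (0 : Fin 3) + 2 = 2) ∧
    ((1 : Fin 3) + 1 = 2 ∧ (1 : Fin 3) + 2 = 0) ∧ ((2 : Fin 3) + 1 = 0 ∧ (2 : Fin 3) + 2 = 1) := by
  decide

set_option maxHeartbeats 4000000 in
/-- The action is compatible with brackets: the three blocks on the left are those of the
commutator of `(A, B; C, -Aᵀ)` and `(A', B'; C', -A'ᵀ)`. -/
lemma act_lie (A B C A' B' C' : M3) (hB : Bᵀ = B) (hC : Cᵀ = C) (hB' : B'ᵀ = B')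
    (hC' : C'ᵀ = C') (v : V) :
    act (A * A' + B * C' - (A' * A + B' * C)) (A * B' - B * A'ᵀ - (A' * B - B' * Aᵀ))
      (C * A' - Aᵀ * C' - (C' * A - A'ᵀ * C)) v =
    act A B C (act A' B' C' v) - act A' B' C' (act A B C v) := by
  have hb := fun i j => congr_fun (congr_fun hB i) j
  have hc := fun i j => congr_fun (congr_fun hC i) j
  have hb' := fun i j => congr_fun (congr_fun hB' i) j
  have hc' := fun i j => congr_fun (congr_fun hC' i) j
  simp only [transpose_apply] at hb hc hb' hc'
  apply V_ext <;> (try refine forall_fin3 ?_ ?_ ?_) <;>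
    simp only [act_inl_zero, act_inr_zero, act_inl_mI, act_inl_sI, act_inr_mI,
      act_inr_sI, Pi.sub_apply, fin3_add, Matrix.sub_apply, Matrix.add_apply, mul_apply,
      transpose_apply, Fin.sum_univ_three, hb 1 0, hb 2 0, hb 2 1, hc 1 0, hc 2 0, hc 2 1,
      hb' 1 0, hb' 2 0, hb' 2 1, hc' 1 0, hc' 2 0, hc' 2 1] <;>
    ring

/-! ### The representation is symplectic -/

/-- The standard symplectic form on `ℂ¹⁴`, the one preserved by `Symplectic.sp (Fin 7) ℂ`. -/
noncomputable def om : V →ₗ[ℂ] V →ₗ[ℂ] ℂ := (Matrix.J (Fin 7) ℂ).toLinearMap₂'  ℂ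

lemma om_eq (u w : V) : om u w = u ⬝ᵥ (Matrix.J (Fin 7) ℂ *ᵥ w) :=
  Matrix.toLinearMap₂'_apply' _ _ _

lemma om_apply (u w : V) : om u w = ∑ i, (u (.inr i) * w (.inl i) - u (.inl i) * w (.inr i)) := by
  simp [om_eq, Matrix.J, fromBlocks_mulVec, dotProduct, Fintype.sum_sum_type, Matrix.neg_mulVec,
    Finset.sum_sub_distrib]
  ring

lemma om_neg_swap (u w : V) : om u w = -om w u := by
  rw [om_apply, om_apply, ← Finset.sum_neg_distrib]
  exact Finset.sum_congr rfl fun i _ => by ring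

/-- `𝔰𝔭(6, ℂ)`. -/
abbrev sp6 := ↥(Symplectic.sp (Fin 3) ℂ)

/-- `𝔰𝔭(14, ℂ)`. -/
abbrev sp14 := ↥(Symplectic.sp (Fin 7) ℂ)

lemma mem_sp_iff {n : Type*} [Fintype n] [DecidableEq n] (X : Matrix (n ⊕ n) (n ⊕ n) ℂ) :
    X ∈ Symplectic.sp n ℂ ↔ Xᵀ * Matrix.J n ℂ = Matrix.J n ℂ * -X := by
  rw [Symplectic.sp, mem_skewAdjointMatricesLieSubalgebra, mem_skewAdjointMatricesSubmodule]
  rfl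

lemma mem_sp14_iff (X : Matrix Ix Ix ℂ) :
    X ∈ Symplectic.sp (Fin 7) ℂ ↔ ∀ u w, om (X *ᵥ u) w + om u (X *ᵥ w) = 0 := by
  have key : ∀ u w, om (X *ᵥ u) w + om u (X *ᵥ w) =
      u ⬝ᵥ ((Xᵀ * Matrix.J (Fin 7) ℂ - Matrix.J (Fin 7) ℂ * -X) *ᵥ w) := by
    intro u w
    simp only [om_eq, sub_mulVec, ← mulVec_mulVec, neg_mulVec, mulVec_neg, sub_neg_eq_add,
      dotProduct_add]
    rw [dotProduct_mulVec u Xᵀ, vecMul_transpose]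
  rw [mem_sp_iff, ← sub_eq_zero]
  constructor
  · intro h u w
    rw [key, h, zero_mulVec, dotProduct_zero]
  · intro h
    ext i j
    have := h (Pi.single i 1) (Pi.single j 1)
    rw [key] at this
    simpa using this

lemma om_skew (y : sp14) (u w : V) : om (y.1 *ᵥ u) w = -om u (y.1 *ᵥ w) :=
  eq_neg_of_add_eq_zero_left ((mem_sp14_iff y.1).1 y.2 u w)

lemma sp14_ext {y z : sp14} (h : ∀ v, y.1 *ᵥ v = z.1 *ᵥ v) : y = z :=
  Subtype.ext (Matrix.mulVec_injective (funext h))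

lemma lie_mulVec (y z : sp14) (v : V) :
    (⁅y, z⁆ : sp14).1 *ᵥ v = y.1 *ᵥ (z.1 *ᵥ v) - z.1 *ᵥ (y.1 *ᵥ v) := by
  have h : (⁅y, z⁆ : sp14).1 = y.1 * z.1 - z.1 * y.1 := rfl
  rw [h, sub_mulVec, mulVec_mulVec, mulVec_mulVec]

/-- The matrix of `act A B C`. -/
noncomputable def rep (A B C : M3) : Matrix Ix Ix ℂ := LinearMap.toMatrix' (act A B C)

lemma rep_mulVec (A B C : M3) (v : V) : rep A B C *ᵥ v = act A B C v :=
  LinearMap.toMatrix'_mulVec _ _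

/-- `om` in the coordinates `α, m, s, β, n, t`. -/
lemma om_split (u w : V) : om u w =
    u (.inr 0) * w (.inl 0) - u (.inl 0) * w (.inr 0)
    + ∑ i, (u (.inr (mI i)) * w (.inl (mI i)) - u (.inl (mI i)) * w (.inr (mI i)))
    + ∑ i, (u (.inr (sI i)) * w (.inl (sI i)) - u (.inl (sI i)) * w (.inr (sI i))) := by
  simp only [om_apply, Fin.sum_univ_seven, Fin.sum_univ_three, mI, sI, cons_val]
  ring

/-- The action is skew for the standard symplectic form: this is its invariance. -/
lemma rep_mem (A B C : M3) (hB : Bᵀ = B) (hC : Cᵀ = C) : rep A B C ∈ Symplectic.sp (Fin 7) ℂ := by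
  have hb := fun i j => congr_fun (congr_fun hB i) j
  have hc := fun i j => congr_fun (congr_fun hC i) j
  simp only [transpose_apply] at hb hc
  refine (mem_sp14_iff _).2 fun u w => ?_
  simp only [rep_mulVec, om_split, act_inl_zero, act_inr_zero, act_inl_mI, act_inl_sI, act_inr_mI,
      act_inr_sI, Fin.sum_univ_three, fin3_add, hb 1 0, hb 2 0, hb 2 1,
    hc 1 0, hc 2 0, hc 2 1]
  ring

lemma sp6_blocks (x : sp6) : x.1.toBlocks₁₂ᵀ = x.1.toBlocks₁₂ ∧ x.1.toBlocks₂₁ᵀ = x.1.toBlocks₂₁ ∧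
    x.1.toBlocks₂₂ = -x.1.toBlocks₁₁ᵀ := by
  have h := (mem_sp_iff x.1).1 x.2
  rw [← fromBlocks_toBlocks x.1, Matrix.J, fromBlocks_transpose, fromBlocks_neg,
    fromBlocks_multiply, fromBlocks_multiply, fromBlocks_inj] at h
  simp only [Matrix.mul_zero, Matrix.mul_one, Matrix.zero_mul, Matrix.one_mul, Matrix.mul_neg,
    Matrix.neg_mul, zero_add, add_zero, neg_neg,
    neg_zero] at h
  obtain ⟨h₁, h₂, -, h₄⟩ := h
  exact ⟨neg_injective h₄, h₁, h₂.symm⟩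

lemma mem_sp6 (A B C : M3) (hB : Bᵀ = B) (hC : Cᵀ = C) :
    fromBlocks A B C (-Aᵀ) ∈ Symplectic.sp (Fin 3) ℂ := by
  rw [mem_sp_iff, Matrix.J, fromBlocks_transpose, fromBlocks_neg,
    fromBlocks_multiply, fromBlocks_multiply, fromBlocks_inj]
  simp [hB, hC]

lemma toBlocks_mul_sub (M N : Matrix (Fin 3 ⊕ Fin 3) (Fin 3 ⊕ Fin 3) ℂ) :
    (M * N - N * M).toBlocks₁₁ = M.toBlocks₁₁ * N.toBlocks₁₁ + M.toBlocks₁₂ * N.toBlocks₂₁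
        - (N.toBlocks₁₁ * M.toBlocks₁₁ + N.toBlocks₁₂ * M.toBlocks₂₁) ∧
      (M * N - N * M).toBlocks₁₂ = M.toBlocks₁₁ * N.toBlocks₁₂ + M.toBlocks₁₂ * N.toBlocks₂₂
        - (N.toBlocks₁₁ * M.toBlocks₁₂ + N.toBlocks₁₂ * M.toBlocks₂₂) ∧
      (M * N - N * M).toBlocks₂₁ = M.toBlocks₂₁ * N.toBlocks₁₁ + M.toBlocks₂₂ * N.toBlocks₂₁
        - (N.toBlocks₂₁ * M.toBlocks₁₁ + N.toBlocks₂₂ * M.toBlocks₂₁) := by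
  refine ⟨?_, ?_, ?_⟩ <;> ext i j <;>
    simp [toBlocks₁₁, toBlocks₁₂, toBlocks₂₁, toBlocks₂₂, mul_apply, Fintype.sum_sum_type]

/-- The embedding of `𝔰𝔭(6, ℂ)` into `𝔰𝔭(14, ℂ)` given by `Λ³₀ℂ⁶`. -/
noncomputable def phi : sp6 →ₗ⁅ℂ⁆ sp14 where
  toFun x := ⟨rep x.1.toBlocks₁₁ x.1.toBlocks₁₂ x.1.toBlocks₂₁,
    rep_mem _ _ _ (sp6_blocks x).1 (sp6_blocks x).2.1⟩
  map_add' x y := by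
    refine sp14_ext fun v => ?_
    have h : (x + y).1 = x.1 + y.1 := rfl
    simp only [rep_mulVec, h, AddMemClass.mk_add_mk, add_mulVec]
    apply V_ext <;> (try refine forall_fin3 ?_ ?_ ?_) <;>
      simp only [act_inl_zero, act_inr_zero, act_inl_mI, act_inl_sI, act_inr_mI,
      act_inr_sI, Pi.add_apply, toBlocks₁₁, toBlocks₁₂, toBlocks₂₁, of_apply, Matrix.add_apply] <;>
      ring
  map_smul' c x := by
    refine sp14_ext fun v => ?_
    have h : (c • x).1 = c • x.1 := rfl
    simp only [rep_mulVec, h, RingHom.id_apply, SetLike.mk_smul_mk, smul_mulVec]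
    apply V_ext <;> (try refine forall_fin3 ?_ ?_ ?_) <;>
      simp only [act_inl_zero, act_inr_zero, act_inl_mI, act_inl_sI, act_inr_mI,
      act_inr_sI, Pi.smul_apply, toBlocks₁₁, toBlocks₁₂, toBlocks₂₁, of_apply, Matrix.smul_apply,
        smul_eq_mul] <;>
      ring
  map_lie' := by
    intro x y
    obtain ⟨hB, hC, hD⟩ := sp6_blocks x
    obtain ⟨hB', hC', hD'⟩ := sp6_blocks y
    refine sp14_ext fun v => ?_
    rw [lie_mulVec]
    simp only [rep_mulVec]
    rw [← act_lie _ _ _ _ _ _ hB hC hB' hC']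
    have h : (⁅x, y⁆ : sp6).1 = x.1 * y.1 - y.1 * x.1 := rfl
    obtain ⟨h₁, h₂, h₃⟩ := toBlocks_mul_sub x.1 y.1
    rw [h, h₁, h₂, h₃, hD, hD']
    congr 2
    · simp only [Matrix.mul_neg]
      abel
    · simp only [Matrix.neg_mul]
      abel

lemma phi_mulVec (x : sp6) (v : V) :
    (phi x).1 *ᵥ v = act x.1.toBlocks₁₁ x.1.toBlocks₁₂ x.1.toBlocks₂₁ v := rep_mulVec _ _ _ _

/-! ### The weight basis and the action of the root vectors -/

set_option linter.unusedSimpArgs false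

/-- The highest weight vector, of weight `3` for the grading element `h0`. -/
noncomputable def e0 : V := mk 1 0 0 0 0 0

/-- The basis vectors dual to the coordinates `m`, of `h0`-weight `1`. -/
noncomputable def em (i : Fin 3) : V := mk 0 (Pi.single i 1) 0 0 0 0

/-- The basis vectors dual to the coordinates `s`, of `h0`-weight `1`. -/
noncomputable def es (i : Fin 3) : V := mk 0 0 (Pi.single i 1) 0 0 0

/-- The lowest weight vector, of weight `-3` for the grading element `h0`. -/
noncomputable def f0 : V := mk 0 0 0 1 0 0

/-- The basis vectors dual to the coordinates `n`, of `h0`-weight `-1`. -/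
noncomputable def fm (i : Fin 3) : V := mk 0 0 0 0 (Pi.single i 1) 0

/-- The basis vectors dual to the coordinates `t`, of `h0`-weight `-1`. -/
noncomputable def fs (i : Fin 3) : V := mk 0 0 0 0 0 (Pi.single i 1)

lemma om_e0 (v : V) : om e0 v = -v (.inr 0) := by
  simp [om_split, e0, mk_inl_zero, mk_inr_zero, mk_inl_mI, mk_inl_sI, mk_inr_mI, mk_inr_sI]

lemma om_f0 (v : V) : om f0 v = v (.inl 0) := by
  simp [om_split, f0, mk_inl_zero, mk_inr_zero, mk_inl_mI, mk_inl_sI, mk_inr_mI, mk_inr_sI]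

lemma om_em (i : Fin 3) (v : V) : om (em i) v = -v (.inr (mI i)) := by
  simp [om_split, em, mk_inl_zero, mk_inr_zero, mk_inl_mI, mk_inl_sI, mk_inr_mI, mk_inr_sI,
    Pi.single_apply]

lemma om_fm (i : Fin 3) (v : V) : om (fm i) v = v (.inl (mI i)) := by
  simp [om_split, fm, mk_inl_zero, mk_inr_zero, mk_inl_mI, mk_inl_sI, mk_inr_mI, mk_inr_sI,
    Pi.single_apply]

lemma om_es (i : Fin 3) (v : V) : om (es i) v = -v (.inr (sI i)) := by
  simp [om_split, es, mk_inl_zero, mk_inr_zero, mk_inl_mI, mk_inl_sI, mk_inr_mI, mk_inr_sI,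
    Pi.single_apply]

lemma om_fs (i : Fin 3) (v : V) : om (fs i) v = v (.inl (sI i)) := by
  simp [om_split, fs, mk_inl_zero, mk_inr_zero, mk_inl_mI, mk_inl_sI, mk_inr_mI, mk_inr_sI,
    Pi.single_apply]

/-- The vectors `e0, em, es` and `f0, fm, fs` form a symplectic basis: the coordinates of `v`
are read off by `om`. -/
lemma expand (v : V) : om f0 v • e0 - om e0 v • f0
    + ∑ i, (om (fm i) v • em i - om (em i) v • fm i)
    + ∑ i, (om (fs i) v • es i - om (es i) v • fs i) = v := by
  simp only [om_e0, om_f0, om_em, om_fm, om_es, om_fs, Fin.sum_univ_three]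
  simp only [e0, f0, em, fm, es, fs]
  apply V_ext <;> (try refine forall_fin3 ?_ ?_ ?_) <;>
    simp [mk_inl_zero, mk_inr_zero, mk_inl_mI, mk_inl_sI, mk_inr_mI, mk_inr_sI]

/-- `(i, j, k)` is a permutation of `(0, 1, 2)`. -/
def D (i j k : Fin 3) : Prop := i ≠ j ∧ j ≠ k ∧ i ≠ k

/-- A statement about permutations of `(0, 1, 2)` is checked on the six of them. -/
lemma D.forall {p : Fin 3 → Fin 3 → Fin 3 → Prop} (h₀ : p 0 1 2) (h₁ : p 1 2 0) (h₂ : p 2 0 1)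
    (h₃ : p 0 2 1) (h₄ : p 1 0 2) (h₅ : p 2 1 0) : ∀ i j k, D i j k → p i j k := by
  rintro i j k ⟨h, h', h''⟩
  fin_cases i <;> fin_cases j <;> fin_cases k <;> first | assumption | contradiction

lemma D.cyc {i j k : Fin 3} (h : D i j k) : D j k i := ⟨h.2.1, h.2.2.symm, h.1.symm⟩

lemma D.swap {i j k : Fin 3} (h : D i j k) : D i k j := ⟨h.2.2, h.2.1.symm, h.1⟩

/-- The element of `𝔰𝔭(6, ℂ)` with given blocks. -/
noncomputable def gen (A B C : M3) (hB : Bᵀ = B) (hC : Cᵀ = C) : sp6 :=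
  ⟨fromBlocks A B C (-Aᵀ), mem_sp6 A B C hB hC⟩

lemma gen_mulVec (A B C : M3) (hB : Bᵀ = B) (hC : Cᵀ = C) (v : V) :
    (phi (gen A B C hB hC)).1 *ᵥ v = act A B C v := by
  rw [phi_mulVec, gen]
  simp only [toBlocks_fromBlocks₁₁, toBlocks_fromBlocks₁₂, toBlocks_fromBlocks₂₁]

/-- The symmetric matrix `Eᵢⱼ + Eⱼᵢ` for `i ≠ j`, and `Eᵢᵢ` for `i = j`. -/
def sym (i j : Fin 3) : M3 :=
  Matrix.of fun a b => if (a = i ∧ b = j) ∨ (a = j ∧ b = i) then 1 else 0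

lemma sym_transpose (i j : Fin 3) : (sym i j)ᵀ = sym i j := by
  ext a b
  simp only [sym, transpose_apply, of_apply]
  congr 1
  exact propext ⟨fun h => by tauto, fun h => by tauto⟩

/-- The lowering root vector with lower left block `sym i j`, for the root `-(εᵢ + εⱼ)`. -/
noncomputable def lo (i j : Fin 3) : sp6 := gen 0 0 (sym i j) (by simp) (sym_transpose i j)

/-- The raising root vector with upper right block `sym i j`, for the root `εᵢ + εⱼ`. -/
noncomputable def up (i j : Fin 3) : sp6 := gen 0 (sym i j) 0 (sym_transpose i j) (by simp)

/-- The action of `lo i j` on `V`. -/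
noncomputable def acl (i j : Fin 3) : V →ₗ[ℂ] V := act 0 0 (sym i j)

/-- The action of `up i j` on `V`. -/
noncomputable def acu (i j : Fin 3) : V →ₗ[ℂ] V := act 0 (sym i j) 0

lemma lo_mulVec (i j : Fin 3) (v : V) : (phi (lo i j)).1 *ᵥ v = acl i j v := gen_mulVec _ _ _ _ _ _

lemma up_mulVec (i j : Fin 3) (v : V) : (phi (up i j)).1 *ᵥ v = acu i j v := gen_mulVec _ _ _ _ _ _

lemma single3 : ((Pi.single 0 1 : Fin 3 → ℂ) 0 = 1 ∧ (Pi.single 0 1 : Fin 3 → ℂ) 1 = 0 ∧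
    (Pi.single 0 1 : Fin 3 → ℂ) 2 = 0) ∧ ((Pi.single 1 1 : Fin 3 → ℂ) 0 = 0 ∧
    (Pi.single 1 1 : Fin 3 → ℂ) 1 = 1 ∧ (Pi.single 1 1 : Fin 3 → ℂ) 2 = 0) ∧
    ((Pi.single 2 1 : Fin 3 → ℂ) 0 = 0 ∧ (Pi.single 2 1 : Fin 3 → ℂ) 1 = 0 ∧
    (Pi.single 2 1 : Fin 3 → ℂ) 2 = 1) := by simp

lemma sym_ap (i j a b : Fin 3) :
    sym i j a b = if (a = i ∧ b = j) ∨ (a = j ∧ b = i) then 1 else 0 := rfl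

lemma fin3_ne : (0 : Fin 3) ≠ 1 ∧ (0 : Fin 3) ≠ 2 ∧ (1 : Fin 3) ≠ 0 ∧ (1 : Fin 3) ≠ 2 ∧
  (2 : Fin 3) ≠ 0 ∧ (2 : Fin 3) ≠ 1 := by decide

set_option maxHeartbeats 4000000 in
/-- The action of the lowering vector `lo i i` on the basis. In this and the next three
tables the vectors come in the order `e0`, `em i`, `em j`, `es i`, `es j`, `fm i`, `fm j`, `fs i`,
`fs j`, `f0`; the remaining ones, with index `k`, follow by exchanging `j` and `k`. -/
lemma acl_diag : ∀ i j k, D i j k →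
    acl i i e0 = em i ∧
    acl i i (em i) = 0 ∧
    acl i i (em j) = -fm k ∧
    acl i i (es i) = (2 : ℂ) • fs i ∧
    acl i i (es j) = 0 ∧
    acl i i (fm i) = -f0 ∧
    acl i i (fm j) = 0 ∧
    acl i i (fs i) = 0 ∧
    acl i i (fs j) = 0 ∧
    acl i i f0 = 0 := by
  refine D.forall ?_ ?_ ?_ ?_ ?_ ?_ <;> (repeat' apply And.intro) <;>
  apply V_ext <;> (try refine forall_fin3 ?_ ?_ ?_) <;>
    simp only [acl, act_inl_zero, act_inr_zero, act_inl_mI,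
      act_inl_sI, act_inr_mI, act_inr_sI, mk_inl_zero, mk_inr_zero, mk_inl_mI, mk_inl_sI, mk_inr_mI,
      mk_inr_sI, e0, em, es, f0, fm, fs,
      sym_ap, fin3_add, Pi.zero_apply, Pi.neg_apply,
      Pi.smul_apply, smul_eq_mul, Matrix.zero_apply, single3, fin3_ne, and_true, and_false,
      or_true, or_false, false_or, true_or, if_true, if_false, ↓reduceIte] <;> ring

set_option maxHeartbeats 4000000 in
lemma acl_off : ∀ i j k, D i j k →
    acl j k e0 = es i ∧
    acl j k (em i) = (2 : ℂ) • fs i ∧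
    acl j k (em j) = 0 ∧
    acl j k (es i) = (2 : ℂ) • fm i ∧
    acl j k (es j) = -((2 : ℂ) • fs k) ∧
    acl j k (fm i) = 0 ∧
    acl j k (fm j) = 0 ∧
    acl j k (fs i) = -f0 ∧
    acl j k (fs j) = 0 ∧
    acl j k f0 = 0 := by
  refine D.forall ?_ ?_ ?_ ?_ ?_ ?_ <;> (repeat' apply And.intro) <;>
  apply V_ext <;> (try refine forall_fin3 ?_ ?_ ?_) <;>
    simp only [acl, act_inl_zero, act_inr_zero, act_inl_mI,
      act_inl_sI, act_inr_mI, act_inr_sI, mk_inl_zero, mk_inr_zero, mk_inl_mI, mk_inl_sI, mk_inr_mI,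
      mk_inr_sI, e0, em, es, f0, fm, fs,
      sym_ap, fin3_add, Pi.zero_apply, Pi.neg_apply,
      Pi.smul_apply, smul_eq_mul, Matrix.zero_apply, single3, fin3_ne, and_true, and_false,
      or_true, or_false, false_or, true_or, if_true, if_false, ↓reduceIte] <;> ring

set_option maxHeartbeats 4000000 in
lemma acu_diag : ∀ i j k, D i j k →
    acu i i e0 = 0 ∧
    acu i i (em i) = e0 ∧
    acu i i (em j) = 0 ∧
    acu i i (es i) = 0 ∧
    acu i i (es j) = 0 ∧
    acu i i (fm i) = 0 ∧
    acu i i (fm j) = -em k ∧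
    acu i i (fs i) = (1 / 2 : ℂ) • es i ∧
    acu i i (fs j) = 0 ∧
    acu i i f0 = -fm i := by
  refine D.forall ?_ ?_ ?_ ?_ ?_ ?_ <;> (repeat' apply And.intro) <;>
  apply V_ext <;> (try refine forall_fin3 ?_ ?_ ?_) <;>
    simp only [acu, act_inl_zero, act_inr_zero, act_inl_mI,
      act_inl_sI, act_inr_mI, act_inr_sI, mk_inl_zero, mk_inr_zero, mk_inl_mI, mk_inl_sI, mk_inr_mI,
      mk_inr_sI, e0, em, es, f0, fm, fs,
      sym_ap, fin3_add, Pi.zero_apply, Pi.neg_apply,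
      Pi.smul_apply, smul_eq_mul, Matrix.zero_apply, single3, fin3_ne, and_true, and_false,
      or_true, or_false, false_or, true_or, if_true, if_false, ↓reduceIte] <;> ring

set_option maxHeartbeats 4000000 in
lemma acu_off : ∀ i j k, D i j k →
    acu j k e0 = 0 ∧
    acu j k (em i) = 0 ∧
    acu j k (em j) = 0 ∧
    acu j k (es i) = (2 : ℂ) • e0 ∧
    acu j k (es j) = 0 ∧
    acu j k (fm i) = es i ∧
    acu j k (fm j) = 0 ∧
    acu j k (fs i) = em i ∧
    acu j k (fs j) = -((1 / 2 : ℂ) • es k) ∧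
    acu j k f0 = -((2 : ℂ) • fs i) := by
  refine D.forall ?_ ?_ ?_ ?_ ?_ ?_ <;> (repeat' apply And.intro) <;>
  apply V_ext <;> (try refine forall_fin3 ?_ ?_ ?_) <;>
    simp only [acu, act_inl_zero, act_inr_zero, act_inl_mI,
      act_inl_sI, act_inr_mI, act_inr_sI, mk_inl_zero, mk_inr_zero, mk_inl_mI, mk_inl_sI, mk_inr_mI,
      mk_inr_sI, e0, em, es, f0, fm, fs,
      sym_ap, fin3_add, Pi.zero_apply, Pi.neg_apply,
      Pi.smul_apply, smul_eq_mul, Matrix.zero_apply, single3, fin3_ne, and_true, and_false,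
      or_true, or_false, false_or, true_or, if_true, if_false, ↓reduceIte] <;> ring

/-! ### The symmetric square and the trace form -/

/-- The rank one endomorphism `v ↦ om w v • u`. -/
noncomputable def rk (u w : V) : Matrix Ix Ix ℂ := vecMulVec u (w ᵥ* Matrix.J (Fin 7) ℂ)

lemma rk_mulVec (u w v : V) : rk u w *ᵥ v = om w v • u := by
  rw [rk, vecMulVec_mulVec, ← dotProduct_mulVec, ← om_eq, op_smul_eq_smul]

lemma trace_mul_rk (Y : Matrix Ix Ix ℂ) (u w : V) : (Y * rk u w).trace = om w (Y *ᵥ u) := by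
  rw [rk, mul_vecMulVec, trace_vecMulVec, dotProduct_comm, ← dotProduct_mulVec, ← om_eq]

/-- The symmetric product `u ⊙ w`, as the element `v ↦ om w v • u + om u v • w` of `𝔰𝔭(14, ℂ)`.
These products identify `Sym² ℂ¹⁴` with `𝔰𝔭(14, ℂ)`. -/
noncomputable def Bl : V →ₗ[ℂ] V →ₗ[ℂ] sp14 :=
  LinearMap.mk₂ ℂ (fun u w => ⟨rk u w + rk w u, by
      refine (mem_sp14_iff _).2 fun a b => ?_
      simp only [add_mulVec, rk_mulVec, map_add, map_smul, LinearMap.add_apply,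
        LinearMap.smul_apply, smul_eq_mul]
      rw [om_neg_swap a w, om_neg_swap a u]
      ring⟩)
    (fun u u' w => by
      refine sp14_ext fun v => ?_
      simp only [AddMemClass.mk_add_mk, add_mulVec, rk_mulVec, map_add, LinearMap.add_apply]
      module)
    (fun c u w => by
      refine sp14_ext fun v => ?_
      simp only [SetLike.mk_smul_mk, smul_mulVec, add_mulVec, rk_mulVec, map_smul,
        LinearMap.smul_apply, smul_eq_mul]
      module)
    (fun u w w' => by
      refine sp14_ext fun v => ?_
      simp only [AddMemClass.mk_add_mk, add_mulVec, rk_mulVec, map_add, LinearMap.add_apply]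
      module)
    (fun c u w => by
      refine sp14_ext fun v => ?_
      simp only [SetLike.mk_smul_mk, smul_mulVec, add_mulVec, rk_mulVec, map_smul,
        LinearMap.smul_apply, smul_eq_mul]
      module)

lemma Bl_val (u w : V) : (Bl u w).1 = rk u w + rk w u := rfl

lemma Bl_mulVec (u w v : V) : (Bl u w).1 *ᵥ v = om w v • u + om u v • w := by
  rw [Bl_val, add_mulVec, rk_mulVec, rk_mulVec]

lemma Bl_comm (u w : V) : Bl u w = Bl w u := by
  refine sp14_ext fun v => ?_
  rw [Bl_mulVec, Bl_mulVec, add_comm]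

/-- The adjoint action is the derivation action on `Sym² ℂ¹⁴`. -/
lemma lie_Bl (y : sp14) (u w : V) : ⁅y, Bl u w⁆ = Bl (y.1 *ᵥ u) w + Bl u (y.1 *ᵥ w) := by
  refine sp14_ext fun v => ?_
  rw [lie_mulVec, AddMemClass.coe_add, add_mulVec]
  simp only [Bl_mulVec, om_skew, mulVec_add, mulVec_smul]
  module

/-- The trace form of `𝔰𝔭(14, ℂ)`. -/
noncomputable def tr (y z : sp14) : ℂ := (y.1 * z.1).trace

lemma tr_Bl (y : sp14) (u w : V) : tr y (Bl u w) = 2 * om w (y.1 *ᵥ u) := by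
  rw [tr, Bl_val, mul_add, trace_add, trace_mul_rk, trace_mul_rk, om_neg_swap u, om_skew, neg_neg]
  ring

lemma tr_comm (y z : sp14) : tr y z = tr z y := trace_mul_comm _ _

/-- The trace form is invariant. -/
lemma tr_lie (x y z : sp14) : tr ⁅x, y⁆ z = -tr y ⁅x, z⁆ := by
  have h : ∀ a b : sp14, (⁅a, b⁆ : sp14).1 = a.1 * b.1 - b.1 * a.1 := fun _ _ => rfl
  rw [tr, tr, h, h, sub_mul, mul_sub, trace_sub, trace_sub, ← mul_assoc y.1 z.1,
    trace_mul_comm (y.1 * z.1) x.1, ← mul_assoc, ← mul_assoc, neg_sub]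

lemma tr_add_right (x y z : sp14) : tr x (y + z) = tr x y + tr x z := by
  rw [tr, AddMemClass.coe_add, mul_add, trace_add]; rfl

lemma tr_smul_right (c : ℂ) (x y : sp14) : tr x (c • y) = c * tr x y := by
  rw [tr, SetLike.val_smul, mul_smul_comm, trace_smul]; rfl

lemma om_nondeg {u : V} (h : ∀ w, om w u = 0) : u = 0 := by
  rw [← expand u]
  simp only [h, zero_smul, sub_zero, Finset.sum_const_zero, add_zero]

lemma tr_nondeg {y : sp14} (h : ∀ z, tr y z = 0) : y = 0 := by
  refine sp14_ext fun v => ?_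
  rw [ZeroMemClass.coe_zero, zero_mulVec]
  refine om_nondeg fun w => ?_
  have := h (Bl v w)
  rw [tr_Bl] at this
  simpa using this

/-- Every `y` is a combination of products `Bl`, namely half the sum of the
products of `y` applied to the symplectic basis with the dual basis. -/
lemma two_smul_eq_Bl (y : sp14) : (2 : ℂ) • y = Bl (y.1 *ᵥ e0) f0 - Bl (y.1 *ᵥ f0) e0
    + ∑ i, (Bl (y.1 *ᵥ em i) (fm i) - Bl (y.1 *ᵥ fm i) (em i))
    + ∑ i, (Bl (y.1 *ᵥ es i) (fs i) - Bl (y.1 *ᵥ fs i) (es i)) := by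
  refine sp14_ext fun v => ?_
  have h₁ := expand (y.1 *ᵥ v)
  have h₂ := congrArg (y.1 *ᵥ ·) (expand v)
  simp only [mulVec_add, mulVec_sub, mulVec_smul, Fin.sum_univ_three] at h₁ h₂
  simp only [Fin.sum_univ_three, AddMemClass.coe_add, AddSubgroupClass.coe_sub, SetLike.val_smul,
    add_mulVec, sub_mulVec, smul_mulVec, Bl_mulVec, om_skew]
  rw [two_smul]
  nth_rw 1 [← h₁]
  rw [← h₂]
  module

/-! ### Generation of `𝔰𝔭(14, ℂ)` -/

lemma sym_comm (i j : Fin 3) : sym i j = sym j i := by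
  ext a b
  rw [sym_ap, sym_ap]
  exact if_congr or_comm rfl rfl

lemma D.sum {M : Type*} [AddCommMonoid M] (f : Fin 3 → M) {i j k : Fin 3} (h : D i j k) :
    ∑ x, f x = f i + f j + f k := by
  rw [Fin.sum_univ_three]
  revert i j k
  refine @(D.forall ?_ ?_ ?_ ?_ ?_ ?_) <;> abel

/-- A property of one index follows from its proof with the other two indices named. -/
lemma D.one {p : Fin 3 → Prop} (h : ∀ {i j k}, D i j k → p i) : ∀ i, p i :=
  forall_fin3 (h (j := 1) (k := 2) (by simp [D])) (h (j := 2) (k := 0) (by simp [D]))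
    (h (j := 0) (k := 1) (by simp [D]))

/-- A property of two indices follows from its proof for equal and for distinct ones, with the
missing indices named. -/
lemma D.two {p : Fin 3 → Fin 3 → Prop} (h : ∀ {i j k}, D i j k → p i i)
    (h' : ∀ {i j k}, D i j k → p i j) : ∀ i j, p i j := by
  intro i j
  rcases eq_or_ne i j with rfl | hij
  · exact D.one (p := fun i => p i i) h i
  · obtain ⟨k, hk⟩ : ∃ k, D i j k := by
      revert i j
      simp only [D]
      decide
    exact h' hk

set_option maxHeartbeats 4000000 in
/-- An `𝔰𝔭(6, ℂ)`-submodule of `𝔰𝔭(14, ℂ)` that contains the image of `𝔰𝔭(6, ℂ)` and the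
highest weight vector `Bl e0 e0` is everything.

All products of basis vectors are shown to vanish modulo `N`. Applying lowering root vectors (`ac`)
to products already known to vanish settles every weight space of `Sym² V` that is reached from
higher ones, except that in the weights of `up i i` and `up j k` these relations leave one
dimension; it is killed by the relations `rel₁` and `rel₂`, which express the
membership of the root vectors `up i i` and `up j k` in `N`. -/
lemma generation (N : Submodule ℂ sp14) (hphi : ∀ x, phi x ∈ N)
    (hlie : ∀ x, ∀ y ∈ N, ⁅phi x, y⁆ ∈ N) (h₀ : Bl e0 e0 ∈ N) : N = ⊤ := by
  let b : V →ₗ[ℂ] V →ₗ[ℂ] (sp14 ⧸ N) := Bl.compr₂ N.mkQ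
  have b_def : ∀ u w, b u w = N.mkQ (Bl u w) := fun _ _ => rfl
  have sy : ∀ u w, b u w = b w u := fun u w => by rw [b_def, b_def, Bl_comm]
  have hz : ∀ {y}, N.mkQ y = 0 ↔ y ∈ N := fun {y} => by
    rw [Submodule.mkQ_apply, Submodule.Quotient.mk_eq_zero]
  have ac : ∀ i j {u w}, b u w = 0 → b (acl i j u) w + b u (acl i j w) = 0 := fun i j u w h => by
    have := hlie (lo i j) _ (hz.1 h)
    rw [lie_Bl, lo_mulVec, lo_mulVec] at this
    rw [b_def, b_def, ← map_add]
    exact hz.2 this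
  -- `two_smul_eq_Bl` read modulo `N`.
  have rel : ∀ y ∈ N, b (y.1 *ᵥ e0) f0 - b (y.1 *ᵥ f0) e0
      + ∑ i, (b (y.1 *ᵥ em i) (fm i) - b (y.1 *ᵥ fm i) (em i))
      + ∑ i, (b (y.1 *ᵥ es i) (fs i) - b (y.1 *ᵥ fs i) (es i)) = 0 := by
    intro y hy
    have := hz.2 (N.smul_mem (2 : ℂ) hy)
    rw [two_smul_eq_Bl] at this
    simp only [map_add, map_sub, map_sum] at this
    exact this
  have rel₁ : ∀ {i j k}, D i j k → (2 : ℂ) • b e0 (fm i) + (2 : ℂ) • b (em j) (em k)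
      - (1 / 2 : ℂ) • b (es i) (es i) = 0 := by
    intro i j k h
    have := rel _ (hphi (up i i))
    simp only [up_mulVec, D.sum _ h, acu_diag _ _ _ h, acu_diag _ _ _ h.swap, map_zero, map_neg,
      map_smul, LinearMap.zero_apply, LinearMap.neg_apply, LinearMap.smul_apply] at this
    rw [sy (fm i), sy (em k)] at this
    rw [← this]
    module
  have rel₂ : ∀ {i j k}, D i j k → (4 : ℂ) • b e0 (fs i) - (2 : ℂ) • b (em i) (es i)
      + b (es j) (es k) = 0 := by
    intro i j k h
    have := rel _ (hphi (up j k))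
    have hs : acu j k (fs k) = -((1 / 2 : ℂ) • es j) := by
      rw [show acu j k = acu k j by rw [acu, acu, sym_comm]]
      exact (acu_off i k j h.swap).2.2.2.2.2.2.2.2.1
    have hs' : acu j k (es k) = 0 ∧ acu j k (em k) = 0 ∧ acu j k (fm k) = 0 := by
      rw [show acu j k = acu k j by rw [acu, acu, sym_comm]]
      obtain ⟨-, -, x, -, y, -, z, -⟩ := acu_off i k j h.swap
      exact ⟨y, x, z⟩
    simp only [up_mulVec, D.sum _ h, acu_off _ _ _ h, hs, hs', map_zero, map_neg,
      map_smul, LinearMap.zero_apply, LinearMap.neg_apply, LinearMap.smul_apply] at this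
    rw [sy (fs i), sy (es k), sy (es i)] at this
    rw [← this]
    module
  have oo : b e0 e0 = 0 := hz.2 h₀
  have om : ∀ {i j k}, D i j k → b e0 (em i) = 0 := by
    intro i j k h
    have e := ac i i (oo)
    simp only [acl_diag _ _ _ h, map_zero, map_neg, map_smul, LinearMap.zero_apply,
      LinearMap.neg_apply, LinearMap.smul_apply] at e
    linear_combination (norm := module) (1 / 2 : ℂ) • e + (1 / 2 : ℂ) • sy e0 (em i)
  have os : ∀ {i j k}, D i j k → b e0 (es i) = 0 := by
    intro i j k h
    have e := ac j k (oo)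
    simp only [acl_off _ _ _ h, map_zero, map_neg, map_smul, LinearMap.zero_apply,
      LinearMap.neg_apply, LinearMap.smul_apply] at e
    linear_combination (norm := module) (1 / 2 : ℂ) • e + (1 / 2 : ℂ) • sy e0 (es i)
  have mm : ∀ {i j k}, D i j k → b (em i) (em i) = 0 := by
    intro i j k h
    have e := ac i i (om h)
    simp only [acl_diag _ _ _ h, map_zero, map_neg, map_smul, LinearMap.zero_apply,
      LinearMap.neg_apply, LinearMap.smul_apply] at e
    linear_combination (norm := module) e
  have mm_aux : ∀ {i j k}, D i j k → b (em i) (em j) = b e0 (fm k) := by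
    intro i j k h
    have e := ac j j (om h)
    simp only [acl_diag _ _ _ h.cyc, acl_diag _ _ _ h.cyc.swap, map_zero, map_neg,
      map_smul, LinearMap.zero_apply, LinearMap.neg_apply, LinearMap.smul_apply] at e
    linear_combination (norm := module) e + sy (em i) (em j)
  have ss_aux : ∀ {i j k}, D i j k → b (es i) (es i) + (2 : ℂ) • b e0 (fm i) = 0 := by
    intro i j k h
    have e := ac j k (os h)
    simp only [acl_off _ _ _ h, map_zero, map_neg, map_smul, LinearMap.zero_apply,
      LinearMap.neg_apply, LinearMap.smul_apply] at e
    linear_combination (norm := module) e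
  -- In the weight of `up i i` three relations in three unknowns have only the zero solution.
  have ofm : ∀ {i j k}, D i j k → b e0 (fm i) = 0 := by
    intro i j k h
    linear_combination (norm := module) (1 / 5 : ℂ) • rel₁ h - (2 / 5 : ℂ) • mm_aux h.cyc
      + (1 / 10 : ℂ) • ss_aux h
  have mm_off : ∀ {i j k}, D i j k → b (em i) (em j) = 0 := by
    intro i j k h
    linear_combination (norm := module) mm_aux h + ofm h.cyc.cyc
  have ss : ∀ {i j k}, D i j k → b (es i) (es i) = 0 := by
    intro i j k h
    linear_combination (norm := module) ss_aux h - (2 : ℂ) • ofm h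
  have mfs : ∀ {i j k}, D i j k → b (em i) (fs i) = 0 := by
    intro i j k h
    have e := ac j k (mm h)
    simp only [acl_off _ _ _ h, map_zero, map_neg, map_smul, LinearMap.zero_apply,
      LinearMap.neg_apply, LinearMap.smul_apply] at e
    linear_combination (norm := module) (1 / 4 : ℂ) • e + (1 / 2 : ℂ) • sy (em i) (fs i)
  have sfs : ∀ {i j k}, D i j k → b (es i) (fs i) = 0 := by
    intro i j k h
    have e := ac i i (ss h)
    simp only [acl_diag _ _ _ h, map_zero, map_neg, map_smul, LinearMap.zero_apply,
      LinearMap.neg_apply, LinearMap.smul_apply] at e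
    linear_combination (norm := module) (1 / 4 : ℂ) • e + (1 / 2 : ℂ) • sy (es i) (fs i)
  have mfm_off : ∀ {i j k}, D i j k → b (em i) (fm j) = 0 := by
    intro i j k h
    have e := ac k k (mm h)
    simp only [acl_diag _ _ _ h.cyc.cyc, map_zero, map_neg, map_smul, LinearMap.zero_apply,
      LinearMap.neg_apply, LinearMap.smul_apply] at e
    linear_combination (norm := module) (-1 / 2 : ℂ) • e + (1 / 2 : ℂ) • sy (em i) (fm j)
  have sfm : ∀ {i j k}, D i j k → b (es i) (fm i) = 0 := by
    intro i j k h
    have e := ac j k (ofm h)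
    simp only [acl_off _ _ _ h, map_zero, map_neg, map_smul, LinearMap.zero_apply,
      LinearMap.neg_apply, LinearMap.smul_apply] at e
    linear_combination (norm := module) e
  have sfm_off : ∀ {i j k}, D i j k → b (es i) (fm j) = 0 := by
    intro i j k h
    have e := ac j k (ofm h.cyc)
    simp only [acl_off _ _ _ h, map_zero, map_neg, map_smul, LinearMap.zero_apply,
      LinearMap.neg_apply, LinearMap.smul_apply] at e
    linear_combination (norm := module) e
  have ms_off : ∀ {i j k}, D i j k → b (em j) (es i) = 0 := by
    intro i j k h
    have e := ac j j (os h)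
    simp only [acl_diag _ _ _ h.cyc.swap, map_zero, map_neg, map_smul, LinearMap.zero_apply,
      LinearMap.neg_apply, LinearMap.smul_apply] at e
    linear_combination (norm := module) e
  have ms_aux : ∀ {i j k}, D i j k → b (em i) (es i) + (2 : ℂ) • b e0 (fs i) = 0 := by
    intro i j k h
    have e := ac i i (os h)
    simp only [acl_diag _ _ _ h, map_zero, map_neg, map_smul, LinearMap.zero_apply,
      LinearMap.neg_apply, LinearMap.smul_apply] at e
    linear_combination (norm := module) e
  have ss_off_aux : ∀ {i j k}, D i j k → b (es j) (es i) - (2 : ℂ) • b e0 (fs k) = 0 := by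
    intro i j k h
    have e := ac i k (os h)
    simp only [acl_off _ _ _ h.cyc.swap, map_zero, map_neg, map_smul, LinearMap.zero_apply,
      LinearMap.neg_apply, LinearMap.smul_apply] at e
    linear_combination (norm := module) e
  -- The same, with `rel₂`, in the weight of `up j k`.
  have ofs : ∀ {i j k}, D i j k → b e0 (fs i) = 0 := by
    intro i j k h
    linear_combination (norm := module) (1 / 10 : ℂ) • rel₂ h + (1 / 5 : ℂ) • ms_aux h
      - (1 / 10 : ℂ) • ss_off_aux h.cyc - (1 / 10 : ℂ) • sy (es j) (es k)
  have ms : ∀ {i j k}, D i j k → b (em i) (es i) = 0 := by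
    intro i j k h
    linear_combination (norm := module) ms_aux h - (2 : ℂ) • ofs h
  have ss_off : ∀ {i j k}, D i j k → b (es i) (es j) = 0 := by
    intro i j k h
    linear_combination (norm := module) sy (es i) (es j) + ss_off_aux h + (2 : ℂ) • ofs h.cyc.cyc
  have mfs_off : ∀ {i j k}, D i j k → b (em j) (fs i) = 0 := by
    intro i j k h
    have e := ac j j (ofs h)
    simp only [acl_diag _ _ _ h.cyc.swap, map_zero, map_neg, map_smul, LinearMap.zero_apply,
      LinearMap.neg_apply, LinearMap.smul_apply] at e
    linear_combination (norm := module) e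
  have of : ∀ {i j k}, D i j k → b e0 f0 = 0 := by
    intro i j k h
    have e := ac j k (ofs h)
    simp only [acl_off _ _ _ h, map_zero, map_neg, map_smul, LinearMap.zero_apply,
      LinearMap.neg_apply, LinearMap.smul_apply] at e
    linear_combination (norm := module) sfs h - e
  have sfs_off : ∀ {i j k}, D i j k → b (es j) (fs i) = 0 := by
    intro i j k h
    have e := ac i k (ofs h)
    simp only [acl_off _ _ _ h.cyc.swap, map_zero, map_neg, map_smul, LinearMap.zero_apply,
      LinearMap.neg_apply, LinearMap.smul_apply] at e
    linear_combination (norm := module) e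
  have mfm : ∀ {i j k}, D i j k → b (em i) (fm i) = 0 := by
    intro i j k h
    have e := ac i i (ofm h)
    simp only [acl_diag _ _ _ h, map_zero, map_neg, map_smul, LinearMap.zero_apply,
      LinearMap.neg_apply, LinearMap.smul_apply] at e
    linear_combination (norm := module) e + of h
  have mf : ∀ {i j k}, D i j k → b (em i) f0 = 0 := by
    intro i j k h
    have e := ac i i (of h)
    simp only [acl_diag _ _ _ h, map_zero, map_neg, map_smul, LinearMap.zero_apply,
      LinearMap.neg_apply, LinearMap.smul_apply] at e
    linear_combination (norm := module) e
  have sf : ∀ {i j k}, D i j k → b (es i) f0 = 0 := by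
    intro i j k h
    have e := ac j k (of h)
    simp only [acl_off _ _ _ h, map_zero, map_neg, map_smul, LinearMap.zero_apply,
      LinearMap.neg_apply, LinearMap.smul_apply] at e
    linear_combination (norm := module) e
  have fmfm : ∀ {i j k}, D i j k → b (fm j) (fm j) = 0 := by
    intro i j k h
    have e := ac k k (mfm_off h)
    simp only [acl_diag _ _ _ h.cyc.cyc, acl_diag _ _ _ h.cyc.cyc.swap, map_zero, map_neg,
      map_smul, LinearMap.zero_apply, LinearMap.neg_apply, LinearMap.smul_apply] at e
    linear_combination (norm := module) (-1 : ℂ) • e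
  have fmfm_off : ∀ {i j k}, D i j k → b (fm k) (fm i) = 0 := by
    intro i j k h
    have e := ac j j (mfm h)
    simp only [acl_diag _ _ _ h.cyc.swap, map_zero, map_neg, map_smul, LinearMap.zero_apply,
      LinearMap.neg_apply, LinearMap.smul_apply] at e
    linear_combination (norm := module) (-1 : ℂ) • e
  have fmfs : ∀ {i j k}, D i j k → b (fm k) (fs k) = 0 := by
    intro i j k h
    have e := ac j j (mfs_off h.cyc.cyc)
    simp only [acl_diag _ _ _ h.cyc.swap, acl_diag _ _ _ h.cyc, map_zero, map_neg,
      map_smul, LinearMap.zero_apply, LinearMap.neg_apply, LinearMap.smul_apply] at e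
    linear_combination (norm := module) (-1 : ℂ) • e
  have fmfs_off : ∀ {i j k}, D i j k → b (fm k) (fs i) = 0 := by
    intro i j k h
    have e := ac j j (mfs h)
    simp only [acl_diag _ _ _ h.cyc.swap, map_zero, map_neg, map_smul, LinearMap.zero_apply,
      LinearMap.neg_apply, LinearMap.smul_apply] at e
    linear_combination (norm := module) (-1 : ℂ) • e
  have fsfs : ∀ {i j k}, D i j k → b (fs i) (fs i) = 0 := by
    intro i j k h
    have e := ac i i (sfs h)
    simp only [acl_diag _ _ _ h, map_zero, map_neg, map_smul, LinearMap.zero_apply,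
      LinearMap.neg_apply, LinearMap.smul_apply] at e
    linear_combination (norm := module) (1 / 2 : ℂ) • e
  have fsfs_off : ∀ {i j k}, D i j k → b (fs i) (fs j) = 0 := by
    intro i j k h
    have e := ac i i (sfs_off h.cyc.swap)
    simp only [acl_diag _ _ _ h, map_zero, map_neg, map_smul, LinearMap.zero_apply,
      LinearMap.neg_apply, LinearMap.smul_apply] at e
    linear_combination (norm := module) (1 / 2 : ℂ) • e
  have fmf : ∀ {i j k}, D i j k → b (fm j) f0 = 0 := by
    intro i j k h
    have e := ac j j (fmfm h)
    simp only [acl_diag _ _ _ h.cyc, map_zero, map_neg, map_smul, LinearMap.zero_apply,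
      LinearMap.neg_apply, LinearMap.smul_apply] at e
    linear_combination (norm := module) (-1 / 2 : ℂ) • e + (1 / 2 : ℂ) • sy (fm j) f0
  have fsf : ∀ {i j k}, D i j k → b (fs i) f0 = 0 := by
    intro i j k h
    have e := ac j k (fsfs h)
    simp only [acl_off _ _ _ h, map_zero, map_neg, map_smul, LinearMap.zero_apply,
      LinearMap.neg_apply, LinearMap.smul_apply] at e
    linear_combination (norm := module) (-1 / 2 : ℂ) • e + (1 / 2 : ℂ) • sy (fs i) f0
  have ff : ∀ {i j k}, D i j k → b f0 f0 = 0 := by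
    intro i j k h
    have e := ac j j (fmf h)
    simp only [acl_diag _ _ _ h.cyc, map_zero, map_neg, map_smul, LinearMap.zero_apply,
      LinearMap.neg_apply, LinearMap.smul_apply] at e
    linear_combination (norm := module) (-1 : ℂ) • e
  -- With all products of basis vectors zero, the expansion in the basis gives the general case.
  have full : ∀ {x}, b x e0 = 0 → b x f0 = 0 → (∀ i, b x (em i) = 0) → (∀ i, b x (fm i) = 0) →
      (∀ i, b x (es i) = 0) → (∀ i, b x (fs i) = 0) → ∀ v, b v x = 0 := by
    intro x h₁ h₂ h₃ h₄ h₅ h₆ v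
    rw [sy, ← expand v]
    simp only [map_add, map_sub, map_sum, map_smul, h₁, h₂, h₃, h₄, h₅, h₆, smul_zero, sub_zero,
      Finset.sum_const_zero, add_zero]
  have hm := D.two (p := fun i j => b (em i) (em j) = 0) mm mm_off
  have hms := D.two (p := fun i j => b (em i) (es j) = 0) ms fun h => ms_off h.cyc.swap
  have hmfm := D.two (p := fun i j => b (em i) (fm j) = 0) mfm mfm_off
  have hmfs := D.two (p := fun i j => b (em i) (fs j) = 0) mfs fun h => mfs_off h.cyc.swap
  have hs := D.two (p := fun i j => b (es i) (es j) = 0) ss ss_off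
  have hsfm := D.two (p := fun i j => b (es i) (fm j) = 0) sfm sfm_off
  have hsfs := D.two (p := fun i j => b (es i) (fs j) = 0) sfs fun h => sfs_off h.cyc.swap
  have hfm := D.two (p := fun i j => b (fm i) (fm j) = 0) (fun h => fmfm h.cyc.swap)
    fun h => fmfm_off h.cyc
  have hfmfs := D.two (p := fun i j => b (fm i) (fs j) = 0) (fun h => fmfs h.cyc)
    fun h => fmfs_off h.cyc
  have hfs := D.two (p := fun i j => b (fs i) (fs j) = 0) fsfs fsfs_off
  have om' := D.one (p := fun i => b e0 (em i) = 0) om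
  have os' := D.one (p := fun i => b e0 (es i) = 0) os
  have ofm' := D.one (p := fun i => b e0 (fm i) = 0) ofm
  have ofs' := D.one (p := fun i => b e0 (fs i) = 0) ofs
  have mf' := D.one (p := fun i => b (em i) f0 = 0) mf
  have sf' := D.one (p := fun i => b (es i) f0 = 0) sf
  have fmf' := D.one (p := fun i => b (fm i) f0 = 0) fun h => fmf h.cyc.swap
  have fsf' := D.one (p := fun i => b (fs i) f0 = 0) fsf
  have of' := D.one (p := fun _ => b e0 f0 = 0) of 0
  have ff' := D.one (p := fun _ => b f0 f0 = 0) ff 0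
  have z₁ := full oo of' om' ofm' os' ofs'
  have z₂ := full ((sy _ _).trans of') ff' (fun i => (sy _ _).trans (mf' i))
    (fun i => (sy _ _).trans (fmf' i)) (fun i => (sy _ _).trans (sf' i))
    (fun i => (sy _ _).trans (fsf' i))
  have z₃ := fun i => full ((sy _ _).trans (om' i)) (mf' i) (hm i) (hmfm i) (hms i) (hmfs i)
  have z₄ := fun i => full ((sy _ _).trans (ofm' i)) (fmf' i)
    (fun j => (sy _ _).trans (hmfm j i)) (hfm i) (fun j => (sy _ _).trans (hsfm j i)) (hfmfs i)
  have z₅ := fun i => full ((sy _ _).trans (os' i)) (sf' i)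
    (fun j => (sy _ _).trans (hms j i)) (hsfm i) (hs i) (hsfs i)
  have z₆ := fun i => full ((sy _ _).trans (ofs' i)) (fsf' i)
    (fun j => (sy _ _).trans (hmfs j i)) (fun j => (sy _ _).trans (hfmfs j i))
    (fun j => (sy _ _).trans (hsfs j i)) (hfs i)
  refine eq_top_iff.2 fun y _ => ?_
  have hy : N.mkQ ((2 : ℂ) • y) = 0 := by
    rw [two_smul_eq_Bl]
    simp only [map_add, map_sub, map_sum, ← b_def, z₁, z₂, z₃, z₄, z₅, z₆, sub_zero,
      Finset.sum_const_zero, add_zero]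
  rw [map_smul] at hy
  exact hz.1 ((smul_eq_zero.1 hy).resolve_left two_ne_zero)

/-! ### Irreducibility and maximality -/

lemma fin3_a (i : Fin 3) : i + 1 + 1 = i + 2 := by revert i; decide

lemma fin3_b (i : Fin 3) : i + 1 + 2 = i := by revert i; decide

lemma fin3_c (i : Fin 3) : i + 2 + 1 = i := by revert i; decide

lemma fin3_d (i : Fin 3) : i + 2 + 2 = i + 1 := by revert i; decide

lemma phi_injective : Function.Injective phi := by
  rw [← LieHom.coe_toLinearMap, ← LinearMap.ker_eq_bot, LinearMap.ker_eq_bot']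
  intro x hx
  have hx' : phi x = 0 := hx
  have h : ∀ v, act x.1.toBlocks₁₁ x.1.toBlocks₁₂ x.1.toBlocks₂₁ v = 0 := by
    intro v
    rw [← phi_mulVec, hx', ZeroMemClass.coe_zero, zero_mulVec]
  obtain ⟨hB, hC, hD⟩ := sp6_blocks x
  have hx₀ := fromBlocks_toBlocks x.1
  rw [hD] at hx₀
  generalize x.1.toBlocks₁₁ = A at h hx₀
  generalize x.1.toBlocks₁₂ = B at h hx₀ hB
  generalize x.1.toBlocks₂₁ = C at h hx₀ hC
  obtain ⟨⟨q₁, q₂⟩, ⟨q₃, q₄⟩, q₅, q₆⟩ := fin3_add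
  have hb := fun i j => congr_fun (congr_fun hB i) j
  have hc := fun i j => congr_fun (congr_fun hC i) j
  simp only [transpose_apply] at hb hc
  have hC₁ : ∀ i, C i i = 0 := fun i => by
    simpa [act_inl_mI, e0, mk_inl_zero, mk_inr_zero, mk_inl_mI, mk_inl_sI, mk_inr_mI, mk_inr_sI]
      using congrFun (h e0) (.inl (mI i))
  have hC₂ : ∀ i, C (i + 1) (i + 2) = 0 := fun i => by
    simpa [act_inl_sI, e0, mk_inl_zero, mk_inr_zero, mk_inl_mI, mk_inl_sI, mk_inr_mI, mk_inr_sI]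
      using congrFun (h e0) (.inl (sI i))
  have hB₁ : ∀ i, B i i = 0 := fun i => by
    simpa [act_inr_mI, f0, mk_inl_zero, mk_inr_zero, mk_inl_mI, mk_inl_sI, mk_inr_mI, mk_inr_sI]
      using congrFun (h f0) (.inr (mI i))
  have hB₂ : ∀ i, B (i + 1) (i + 2) = 0 := fun i => by
    simpa [act_inr_sI, f0, mk_inl_zero, mk_inr_zero, mk_inl_mI, mk_inl_sI, mk_inr_mI, mk_inr_sI]
      using congrFun (h f0) (.inr (sI i))
  have hA₁ : ∀ i, A i i = 0 := fun i => by
    simpa [act_inl_sI, es, mk_inl_zero, mk_inr_zero, mk_inl_mI, mk_inl_sI, mk_inr_mI, mk_inr_sI]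
      using congrFun (h (es i)) (.inl (sI i))
  have hA₂ : ∀ i, A (i + 1) i = 0 := fun i => by
    simpa [act_inl_mI, es, mk_inl_zero, mk_inr_zero, mk_inl_mI, mk_inl_sI, mk_inr_mI, mk_inr_sI]
      using congrFun (h (es (i + 2))) (.inl (mI i))
  have hA₃ : ∀ i, A (i + 2) i = 0 := fun i => by
    simpa [act_inl_mI, es, mk_inl_zero, mk_inr_zero, mk_inl_mI, mk_inl_sI, mk_inr_mI, mk_inr_sI]
      using congrFun (h (es (i + 1))) (.inl (mI i))
  have ext₀ : ∀ M : M3, (∀ i, M i i = 0) → (∀ i, M (i + 1) i = 0) → (∀ i, M (i + 2) i = 0) →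
      M = 0 := by
    intro M h₁ h₂ h₃
    have h₂₀ := h₂ 0
    have h₂₁ := h₂ 1
    have h₂₂ := h₂ 2
    have h₃₀ := h₃ 0
    have h₃₁ := h₃ 1
    have h₃₂ := h₃ 2
    rw [q₁] at h₂₀
    rw [q₃] at h₂₁
    rw [q₅] at h₂₂
    rw [q₂] at h₃₀
    rw [q₄] at h₃₁
    rw [q₆] at h₃₂
    ext i j
    fin_cases i <;> fin_cases j
    exacts [h₁ 0, h₃₁, h₂₂, h₂₀, h₁ 1, h₃₂, h₃₀, h₂₁, h₁ 2]
  have sym₀ : ∀ M : M3, Mᵀ = M → (∀ i, M i i = 0) → (∀ i, M (i + 1) (i + 2) = 0) → M = 0 := by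
    intro M hM h₁ h₂
    have h₄ : ∀ i j, M i j = M j i := fun i j => congr_fun (congr_fun hM j) i
    refine ext₀ M h₁ (fun i => ?_) fun i => ?_
    · have := h₂ (i + 2)
      rwa [fin3_c, fin3_d, h₄] at this
    · have := h₂ (i + 1)
      rwa [fin3_a, fin3_b] at this
  rw [ext₀ A hA₁ hA₂ hA₃, sym₀ B hB hB₁ hB₂, sym₀ C hC hC₁ hC₂] at hx₀
  refine Subtype.ext ?_
  rw [← hx₀]
  simp

lemma lie_up (i j : Fin 3) (u w : V) :
    ⁅phi (up i j), Bl u w⁆ = Bl (acu i j u) w + Bl u (acu i j w) := by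
  rw [lie_Bl, up_mulVec, up_mulVec]

/-- The raising vectors `up i i`, applied to the lowest weight vector `Bl f0 f0`, lead up to
`Bl e0 e0`. -/
lemma raise (N : Submodule ℂ sp14) (hlie : ∀ x, ∀ y ∈ N, ⁅phi x, y⁆ ∈ N) (h : Bl f0 f0 ∈ N) :
    Bl e0 e0 ∈ N := by
  have a₀ := acu_diag 0 1 2 (by simp [D])
  have a₁ := acu_diag 1 0 2 (by simp [D])
  have a₁' := acu_diag 1 2 0 (by simp [D])
  have a₂ := acu_diag 2 0 1 (by simp [D])
  have up_mem : ∀ i {u w z}, Bl u w ∈ N → ∀ c : ℂ, c ≠ 0 →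
      Bl (acu i i u) w + Bl u (acu i i w) = c • z → z ∈ N := by
    intro i u w z h c hc hz
    have := hlie (up i i) _ h
    rw [lie_up, hz] at this
    exact (N.smul_mem_iff hc).1 this
  have h₁ : Bl (fm 0) f0 ∈ N := by
    refine up_mem 0 h (-2) (by norm_num) ?_
    rw [Bl_comm f0]
    simp only [a₀, map_neg, LinearMap.neg_apply]
    module
  have h₂ : Bl (fm 0) (fm 0) ∈ N := by
    refine up_mem 0 h₁ (-1) (by norm_num) ?_
    simp only [a₀, map_neg, map_zero, LinearMap.zero_apply]
    module
  have h₃ : Bl (em 2) (fm 0) ∈ N := by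
    refine up_mem 1 h₂ (-2) (by norm_num) ?_
    rw [Bl_comm (fm 0) (acu _ _ _)]
    simp only [a₁, map_neg, LinearMap.neg_apply]
    module
  have h₄ : Bl (em 2) (em 2) ∈ N := by
    refine up_mem 1 h₃ (-1) (by norm_num) ?_
    simp only [a₁, a₁', map_neg, map_zero, LinearMap.zero_apply]
    module
  have h₅ : Bl e0 (em 2) ∈ N := by
    refine up_mem 2 h₄ 2 (by norm_num) ?_
    rw [Bl_comm (em 2) (acu _ _ _)]
    simp only [a₂]
    module
  refine up_mem 2 h₅ 1 (by norm_num) ?_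
  simp only [a₂, map_zero, LinearMap.zero_apply]
  module

/-- The eigenvalues of the grading element on the standard basis of `ℂ¹⁴`. -/
def wt : Ix → ℤ := Sum.elim ![3, 1, 1, 1, 1, 1, 1] ![-3, -1, -1, -1, -1, -1, -1]

/-- The grading element of `𝔰𝔭(6, ℂ)`, with blocks `A = 1` and `B = C = 0`. -/
noncomputable def h0 : sp6 := gen 1 0 0 transpose_zero transpose_zero

lemma h0_mulVec (v : V) (a : Ix) : ((phi h0).1 *ᵥ v) a = wt a * v a := by
  rw [h0, gen_mulVec]
  have h : act 1 0 0 v = fun a => (wt a : ℂ) * v a := by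
    have w₁ : ∀ i, wt (.inl (mI i)) = 1 ∧ wt (.inl (sI i)) = 1 ∧ wt (.inr (mI i)) = -1 ∧
        wt (.inr (sI i)) = -1 := by decide
    have w₂ : wt (.inl 0) = 3 ∧ wt (.inr 0) = -3 := by decide
    have h₁ : ∀ i : Fin 3, (1 : M3) (i + 1) i = 0 ∧ (1 : M3) (i + 2) i = 0 ∧
        (1 : M3) i (i + 1) = 0 ∧ (1 : M3) i (i + 2) = 0 ∧ (1 : M3) (i + 1) (i + 2) = 0 ∧
        (1 : M3) (i + 2) (i + 1) = 0 := by
      intro i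
      fin_cases i <;> simp
    apply V_ext <;> (try intro i) <;>
    simp only [act_inl_zero, act_inr_zero, act_inl_mI, act_inl_sI, act_inr_mI, act_inr_sI, w₁, w₂,
      h₁, Matrix.zero_apply, Matrix.one_apply_eq] <;> push_cast <;> ring
  rw [h]

lemma h0_eq : (phi h0).1 = Matrix.diagonal fun a => (wt a : ℂ) := by
  refine Matrix.mulVec_injective (funext fun v => funext fun a => ?_)
  rw [h0_mulVec, mulVec_diagonal]

lemma h0_lie (y : sp14) (a b : Ix) : (⁅phi h0, y⁆ : sp14).1 a b = (wt a - wt b) * y.1 a b := by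
  have h : (⁅phi h0, y⁆ : sp14).1 = (phi h0).1 * y.1 - y.1 * (phi h0).1 := rfl
  rw [h, h0_eq, Matrix.sub_apply, diagonal_mul, mul_diagonal]
  ring

/-- A polynomial in `h0`, given by its roots `l`, acts on coordinates by scalars and preserves
`W`. A suitable choice of `l` projects onto a weight space. -/
lemma filter_V (W : Submodule ℂ V) (hW : ∀ v ∈ W, (phi h0).1 *ᵥ v ∈ W) (l : List ℤ) {v : V}
    (hv : v ∈ W) : (fun a => (((l.map fun c => wt a - c).prod : ℤ) : ℂ) * v a) ∈ W := by
  induction l with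
  | nil => simpa using hv
  | cons c l ih =>
    convert W.sub_mem (hW _ ih) (W.smul_mem (c : ℂ) ih) using 1
    funext a
    rw [Pi.sub_apply, h0_mulVec, Pi.smul_apply, List.map_cons, List.prod_cons, smul_eq_mul]
    push_cast
    ring

/-- A polynomial in `ad h0`, given by its roots `l`, acts on matrix entries by scalars and
preserves `N`. -/
lemma filter_sp (N : Submodule ℂ sp14) (hN : ∀ y ∈ N, ⁅phi h0, y⁆ ∈ N) (l : List ℤ) {y : sp14}
    (hy : y ∈ N) : ∃ z ∈ N, ∀ a b,
      z.1 a b = (((l.map fun c => wt a - wt b - c).prod : ℤ) : ℂ) * y.1 a b := by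
  induction l with
  | nil => exact ⟨y, hy, by simp⟩
  | cons c l ih =>
    obtain ⟨z, hz, h⟩ := ih
    refine ⟨⁅phi h0, z⁆ - (c : ℂ) • z, N.sub_mem (hN _ hz) (N.smul_mem _ hz), fun a b => ?_⟩
    rw [AddSubgroupClass.coe_sub, Matrix.sub_apply, h0_lie, SetLike.val_smul, Matrix.smul_apply, h,
      List.map_cons, List.prod_cons, smul_eq_mul]
    push_cast
    ring

lemma f0_eq : f0 = Pi.single (.inr 0) 1 := by
  ext (i | i) <;> fin_cases i <;> rfl

lemma e0_eq : e0 = Pi.single (.inl 0) 1 := by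
  ext (i | i) <;> fin_cases i <;> rfl

/-- The polynomial with roots `3, 1, -1` kills all weights of `V` but `-3`, where it takes
the value `-48`. -/
lemma f0_mem (W : Submodule ℂ V) (hW : ∀ v ∈ W, (phi h0).1 *ᵥ v ∈ W) {v : V} (hv : v ∈ W)
    (h : v (.inr 0) ≠ 0) : f0 ∈ W := by
  have := filter_V W hW [3, 1, -1] hv
  refine (W.smul_mem_iff (mul_ne_zero (by norm_num : (-48 : ℂ) ≠ 0) h)).1 ?_
  convert this using 1
  funext a
  have h₁ : ∀ a, (([3, 1, -1] : List ℤ).map fun c => wt a - c).prod =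
    if a = .inr 0 then -48 else 0 := by decide
  rw [h₁, f0_eq, Pi.smul_apply, Pi.single_apply]
  split_ifs with ha
  · subst ha
    simp
  · simp

/-- The polynomial with roots `6, 4, 2, 0, -2, -4` kills all weights of `ad h0` but `-6`,
where it takes the value `46080`; the weight space of `-6` is the line of `Bl f0 f0`. -/
lemma Bl_f0_mem (N : Submodule ℂ sp14) (hN : ∀ y ∈ N, ⁅phi h0, y⁆ ∈ N) {y : sp14}
    (hy : y ∈ N) (h : y.1 (.inr 0) (.inl 0) ≠ 0) : Bl f0 f0 ∈ N := by
  obtain ⟨z, hz, h₂⟩ := filter_sp N hN [6, 4, 2, 0, -2, -4] hy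
  have h₁ : ∀ a b, (([6, 4, 2, 0, -2, -4] : List ℤ).map fun c => wt a - wt b - c).prod =
    if a = .inr 0 ∧ b = .inl 0 then 46080 else 0 := by decide
  refine (N.smul_mem_iff (mul_ne_zero (by norm_num : (23040 : ℂ) ≠ 0) h)).1 ?_
  convert hz using 1
  refine sp14_ext fun v => funext fun a => ?_
  rw [SetLike.val_smul, smul_mulVec, Bl_mulVec, om_f0]
  simp only [mulVec, dotProduct, h₂, h₁, f0_eq]
  by_cases ha : a = .inr 0
  · subst ha
    simp
    ring
  · simp [ha]

lemma irreducible (W : Submodule ℂ V) (hW : ∀ x, ∀ v ∈ W, (phi x).1 *ᵥ v ∈ W) :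
    W = ⊥ ∨ W = ⊤ := by
  have top_of_e0 : ∀ W : Submodule ℂ V, (∀ x, ∀ v ∈ W, (phi x).1 *ᵥ v ∈ W) → e0 ∈ W → W = ⊤ := by
    intro W hW h₀
    have hl : ∀ i j, ∀ v ∈ W, acl i j v ∈ W := fun i j v hv => lo_mulVec i j v ▸ hW _ v hv
    have hm : ∀ i, em i ∈ W := D.one fun {i j k} h => by
      have := hl i i _ h₀
      rwa [(acl_diag i j k h).1] at this
    have hs : ∀ i, es i ∈ W := D.one fun {i j k} h => by
      have := hl j k _ h₀
      rwa [(acl_off i j k h).1] at this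
    have hfm : ∀ i, fm i ∈ W := D.one fun {i j k} h => by
      have := hl j k _ (hs i)
      rw [(acl_off i j k h).2.2.2.1] at this
      exact (W.smul_mem_iff two_ne_zero).1 this
    have hfs : ∀ i, fs i ∈ W := D.one fun {i j k} h => by
      have := hl i i _ (hs i)
      rw [(acl_diag i j k h).2.2.2.1] at this
      exact (W.smul_mem_iff two_ne_zero).1 this
    have hf : f0 ∈ W := by
      have := hl 0 0 _ (hfm 0)
      rw [(acl_diag 0 1 2 (by simp [D])).2.2.2.2.2.1] at this
      exact W.neg_mem_iff.1 this
    refine eq_top_iff.2 fun v _ => ?_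
    rw [← expand v]
    refine W.add_mem (W.add_mem (W.sub_mem (W.smul_mem _ h₀) (W.smul_mem _ hf)) ?_) ?_
    · exact W.sum_mem fun i _ => W.sub_mem (W.smul_mem _ (hm i)) (W.smul_mem _ (hfm i))
    · exact W.sum_mem fun i _ => W.sub_mem (W.smul_mem _ (hs i)) (W.smul_mem _ (hfs i))
  by_cases hf : f0 ∈ W
  · right
    refine top_of_e0 W hW ?_
    have hu : ∀ i j, ∀ v ∈ W, acu i j v ∈ W := fun i j v hv => up_mulVec i j v ▸ hW _ v hv
    have a₀ := acu_diag 0 1 2 (by simp [D])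
    have a₁ := acu_diag 1 0 2 (by simp [D])
    have a₂ := acu_diag 2 0 1 (by simp [D])
    have h₁ := hu 0 0 _ hf
    simp only [a₀, W.neg_mem_iff] at h₁
    have h₂ := hu 1 1 _ h₁
    simp only [a₁, W.neg_mem_iff] at h₂
    have h₃ := hu 2 2 _ h₂
    simpa only [a₂] using h₃
  · left
    -- The symplectic orthogonal of `W`.
    let W' : Submodule ℂ V :=
      { carrier := {v | ∀ w ∈ W, om w v = 0}
        add_mem' := fun {u v} hu hv w hw => by rw [map_add, hu w hw, hv w hw, add_zero]
        zero_mem' := fun w _ => map_zero _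
        smul_mem' := fun c v hv w hw => by rw [map_smul, hv w hw, smul_zero] }
    have hW' : W' = ⊤ := by
      refine top_of_e0 W' (fun x v hv w hw => ?_) fun w hw => ?_
      · rw [← neg_eq_zero, ← om_skew]
        exact hv _ (hW x w hw)
      · rw [om_neg_swap, om_e0, neg_neg]
        by_contra h
        exact hf (f0_mem W (hW h0) hw h)
    refine (Submodule.eq_bot_iff W).2 fun w hw => om_nondeg fun v => ?_
    have : v ∈ W' := hW' ▸ Submodule.mem_top
    rw [om_neg_swap, this w hw, neg_zero]

/-- An element of `𝔰𝔭(6, ℂ)` that sends `f0` to a nonzero multiple of `e0` does not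
exist, since the action shifts the `h0`-weight by at most `2`. -/
lemma Bl_e0_not_mem : Bl e0 e0 ∉ phi.range := by
  rintro ⟨x, hx⟩
  have hx' : phi x = Bl e0 e0 := hx
  have h := congrFun (phi_mulVec x f0) (.inl 0)
  rw [hx', Bl_mulVec, act_inl_zero, om_e0] at h
  simp only [Pi.add_apply, Pi.smul_apply, e0, f0, mk_inl_zero, mk_inr_zero, mk_inl_mI, mk_inl_sI,
    smul_eq_mul, Pi.zero_apply] at h
  norm_num at h

lemma range_ne_top : phi.range ≠ ⊤ := fun h => Bl_e0_not_mem (h ▸ LieSubalgebra.mem_top _)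

lemma mem_range (x : sp6) : phi x ∈ phi.range := ⟨x, rfl⟩

/-- The image of `𝔰𝔭(6, ℂ)` is maximal. -/
lemma eq_range (s : LieSubalgebra ℂ sp14) (hs : s ≠ ⊤) (hm : phi.range ≤ s) : s = phi.range := by
  have hphi : ∀ x, phi x ∈ s := fun x => hm (mem_range x)
  have he : Bl e0 e0 ∉ s := by
    intro h
    refine hs (LieSubalgebra.toSubmodule_injective ?_)
    exact generation s.toSubmodule hphi (fun x y hy => s.lie_mem (hphi x) hy) h
  have hf : Bl f0 f0 ∉ s := fun h =>
    he (raise s.toSubmodule (fun x y hy => s.lie_mem (hphi x) hy) h)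
  have h₀ : ∀ y ∈ s, y.1 (.inr 0) (.inl 0) = 0 := by
    intro y hy
    by_contra h
    exact hf (Bl_f0_mem s.toSubmodule (fun y hy => s.lie_mem (hphi h0) hy) hy h)
  -- The orthogonal of `s` for the trace form.
  let T : Submodule ℂ sp14 :=
    { carrier := {y | ∀ z ∈ s, tr z y = 0}
      add_mem' := fun {u v} hu hv z hz => by rw [tr_add_right, hu z hz, hv z hz, add_zero]
      zero_mem' := fun z _ => by rw [← zero_smul ℂ (0 : sp14), tr_smul_right, zero_mul]
      smul_mem' := fun c y hy z hz => by rw [tr_smul_right, hy z hz, mul_zero] }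
  have hT : T ⊔ phi.range.toSubmodule = ⊤ := by
    refine generation _ (fun x => Submodule.mem_sup_right (mem_range x)) (fun x y hy => ?_)
      (Submodule.mem_sup_left fun z hz => ?_)
    · obtain ⟨t, ht, p, hp, rfl⟩ := Submodule.mem_sup.1 hy
      rw [lie_add]
      refine Submodule.add_mem_sup (fun z hz => ?_) (phi.range.lie_mem (mem_range x) hp)
      rw [← neg_eq_zero, ← tr_lie]
      exact ht _ (s.lie_mem (hphi x) hz)
    · rw [tr_Bl, om_e0, e0_eq, mulVec_single_one]
      simp [h₀ z hz]
  refine le_antisymm (fun y hy => ?_) hm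
  obtain ⟨t, ht, p, hp, rfl⟩ := Submodule.mem_sup.1 (hT ▸ Submodule.mem_top : y ∈ _)
  have hts : t ∈ s := by simpa using s.sub_mem hy (hm hp)
  have ht0 : t = 0 := by
    refine tr_nondeg fun z => ?_
    obtain ⟨t', ht', p', hp', rfl⟩ := Submodule.mem_sup.1 (hT ▸ Submodule.mem_top : z ∈ _)
    rw [tr_add_right, ht' t hts, tr_comm, ht p' (hm hp'), add_zero]
  rw [ht0, zero_add]
  exact hp

lemma isMax : IsMaxSubalgebra phi.range := ⟨range_ne_top, eq_range⟩

/-! ### The S-property -/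

/-- Generalized eigenvectors for a nonzero eigenvalue lie in the range. -/
lemma mem_range_of_pow_sub {E : Type*} [AddCommGroup E] [Module ℂ E] (f : Module.End ℂ E) {c : ℂ}
    (hc : c ≠ 0) (k : ℕ) {y : E} (h : ((f - c • 1) ^ k) y = 0) : y ∈ LinearMap.range f := by
  induction k generalizing y with
  | zero =>
    have hy : y = 0 := by simpa using h
    exact hy ▸ Submodule.zero_mem _
  | succ k ih =>
    rw [pow_succ, Module.End.mul_apply] at h
    have h₁ := Submodule.sub_mem _ (LinearMap.mem_range_self f y) (ih h)
    have h₂ : f y - (f - c • 1) y = c • y := by simp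
    rw [h₂] at h₁
    exact (Submodule.smul_mem_iff _ hc).1 h₁

/-- A Cartan subalgebra `H` contains an `x` on which no nonzero root vanishes;
then `ad x` is surjective on each nonzero root space, so `L = H + [x, L]`. -/
lemma exists_cartan_regular {L : Type*} [LieRing L] [LieAlgebra ℂ L] [FiniteDimensional ℂ L]
    (H : LieSubalgebra ℂ L) [H.IsCartanSubalgebra] :
    ∃ x ∈ H, ∀ y : L, ∃ h ∈ H, ∃ z : L, y = h + ⁅x, z⁆ := by
  obtain ⟨x, hx⟩ : ∃ x : H, ∀ χ : {χ : LieModule.Weight ℂ H L // ¬χ.IsZero}, χ.1 x ≠ 0 := by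
    have : Finite {χ : LieModule.Weight ℂ H L // ¬χ.IsZero} := inferInstance
    refine Module.Dual.exists_forall_ne_zero_of_forall_exists
      (fun χ : {χ : LieModule.Weight ℂ H L // ¬χ.IsZero} => LieModule.Weight.toLinear ℂ H L χ.1)
      fun χ => ?_
    by_contra! h
    exact χ.2 (funext h)
  refine ⟨x, x.2, fun y => ?_⟩
  suffices hT : (⊤ : Submodule ℂ L) ≤ H.toSubmodule ⊔ LinearMap.range (LieModule.toEnd ℂ H L x) by
    obtain ⟨h, hh, w, ⟨z, rfl⟩, rfl⟩ := Submodule.mem_sup.1 (hT (Submodule.mem_top (x := y)))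
    exact ⟨h, hh, z, rfl⟩
  have h₁ := congrArg LieSubmodule.toSubmodule (LieModule.iSup_genWeightSpace_eq_top' ℂ H L)
  rw [LieSubmodule.iSup_toSubmodule, LieSubmodule.top_toSubmodule] at h₁
  rw [← h₁]
  refine iSup_le fun χ => ?_
  by_cases hχ : χ.IsZero
  · refine le_sup_of_le_left fun y hy => ?_
    have h₂ : (χ : H → ℂ) = 0 := hχ
    rw [h₂] at hy
    have h₃ := LieAlgebra.rootSpace_zero_eq ℂ L H
    have h₄ : y ∈ LieAlgebra.rootSpace H (0 : H → ℂ) := hy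
    rw [h₃] at h₄
    exact h₄
  · refine le_sup_of_le_right fun y hy => ?_
    obtain ⟨k, hk⟩ := (LieModule.mem_genWeightSpace L χ y).1 hy x
    exact mem_range_of_pow_sub _ (hx ⟨χ, hχ⟩) k hk

/-- The cube of a skew endomorphism is skew. -/
def cube (y : sp14) : sp14 := ⟨y.1 * y.1 * y.1, by
  refine (mem_sp14_iff _).2 fun u w => ?_
  simp only [← mulVec_mulVec, om_skew]
  ring⟩

lemma lie_cube (y : sp14) : ⁅y, cube y⁆ = 0 := by
  refine Subtype.ext ?_
  have h : (⁅y, cube y⁆ : sp14).1 = y.1 * (y.1 * y.1 * y.1) - y.1 * y.1 * y.1 * y.1 := rfl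
  rw [h, ← mul_assoc, ← mul_assoc, sub_self]
  rfl

/-- A linear form on matrices that vanishes on the image of `𝔰𝔭(6, ℂ)`: the weight of `e0` is the
sum of the weights of the three `es i`. -/
noncomputable def ell : Matrix Ix Ix ℂ →ₗ[ℂ] ℂ :=
  Matrix.entryLinearMap ℂ ℂ (.inl 0) (.inl 0) -
    ∑ i : Fin 3, Matrix.entryLinearMap ℂ ℂ (.inl (sI i)) (.inl (sI i))

lemma ell_apply (Y : Matrix Ix Ix ℂ) :
    ell Y = Y (.inl 0) (.inl 0) - ∑ i, Y (.inl (sI i)) (.inl (sI i)) := by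
  simp [ell]

lemma ell_phi (x : sp6) : ell (phi x).1 = 0 := by
  have h : ∀ a b, (phi x).1 a b = ((phi x).1 *ᵥ Pi.single b 1) a := fun a b => by simp
  rw [ell_apply, Fin.sum_univ_three]
  simp only [h, phi_mulVec, act_inl_zero, act_inl_sI]
  simp [fin3_add, mI, sI]

/-- For every `x` in `𝔰𝔭(6, ℂ)`, the endomorphism induced by `ad (phi x)` on the quotient of
`𝔰𝔭(14, ℂ)` by the image is singular. Its determinant at `x + t • h0` is a polynomial `P` in `t`,
and `G = ell ((phi (x + t • h0))³)` is a polynomial in `t` of degree `3`. Where `G` does not vanish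
the cube is outside the image, and it commutes with `phi (x + t • h0)`, so `P` vanishes there.
Hence `G * P = 0` and `P = 0`. -/
lemma singular (x : sp6) : ∃ y ∉ phi.range, ⁅phi x, y⁆ ∈ phi.range := by
  classical
  set Q := sp14 ⧸ phi.range.toSubmodule
  have hle : ∀ z : sp6, phi.range.toSubmodule ≤
      phi.range.toSubmodule.comap (LieAlgebra.ad ℂ sp14 (phi z) : Module.End ℂ sp14) :=
    fun z y hy => phi.range.lie_mem (mem_range z) hy
  let f : sp6 → Module.End ℂ Q := fun z => Submodule.mapQ _ _ _ (hle z)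
  have f_mk : ∀ z y, f z (Submodule.Quotient.mk y) = Submodule.Quotient.mk ⁅phi z, y⁆ :=
    fun z y => rfl
  let b := Module.finBasis ℂ Q
  let P : Polynomial ℂ := (((LinearMap.toMatrix b b (f x)).map Polynomial.C) +
    (Polynomial.X : Polynomial ℂ) • ((LinearMap.toMatrix b b (f h0)).map Polynomial.C)).det
  have hP : ∀ t : ℂ, P.eval t = LinearMap.det (f (x + t • h0)) := by
    intro t
    have hf : f (x + t • h0) = f x + t • f h0 := by
      refine LinearMap.ext fun q => ?_
      obtain ⟨y, rfl⟩ := Submodule.Quotient.mk_surjective _ q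
      simp only [LinearMap.add_apply, LinearMap.smul_apply, f_mk, map_add, map_smul, add_lie,
        smul_lie, Submodule.Quotient.mk_add, Submodule.Quotient.mk_smul]
    rw [hf, ← LinearMap.det_toMatrix b, map_add, map_smul]
    rw [← Polynomial.coe_evalRingHom, RingHom.map_det]
    congr 1
    ext i j
    simp only [RingHom.mapMatrix_apply, Matrix.map_apply, Matrix.add_apply, Matrix.smul_apply,
      smul_eq_mul, Polynomial.coe_evalRingHom, Polynomial.eval_add, Polynomial.eval_mul,
      Polynomial.eval_C, Polynomial.eval_X]
  let A := (phi x).1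
  let B := (phi h0).1
  let G : Polynomial ℂ := Polynomial.C (ell (A * A * A))
    + Polynomial.C (ell (A * A * B + A * B * A + B * A * A)) * Polynomial.X
    + Polynomial.C (ell (A * B * B + B * A * B + B * B * A)) * Polynomial.X ^ 2
    + Polynomial.C 24 * Polynomial.X ^ 3
  -- `27 - 3`, the cubes of the weights `3` and `1, 1, 1`.
  have hB : ell (B * B * B) = 24 := by
    simp only [B, h0_eq, diagonal_mul_diagonal, ell_apply, diagonal_apply_eq, Fin.sum_univ_three]
    simp [wt, sI]
    norm_num
  have hG : ∀ t : ℂ, G.eval t = ell (cube (phi (x + t • h0))).1 := by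
    intro t
    have h : (cube (phi (x + t • h0))).1 = A * A * A + t • (A * A * B + A * B * A + B * A * A)
        + t ^ 2 • (A * B * B + B * A * B + B * B * A) + t ^ 3 • (B * B * B) := by
      have h' : (phi (x + t • h0)).1 = A + t • B := by rw [map_add, map_smul]; rfl
      simp only [cube, h', add_mul, mul_add, smul_mul_assoc, mul_smul_comm]
      module
    rw [h]
    simp only [map_add, map_smul, hB, G, Polynomial.eval_add, Polynomial.eval_mul,
      Polynomial.eval_C, Polynomial.eval_X, Polynomial.eval_pow, smul_eq_mul]
    ring
  have hG0 : G ≠ 0 := by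
    intro h
    have := congrArg (Polynomial.coeff · 3) h
    simp only [G, Polynomial.coeff_add, Polynomial.coeff_C_mul, Polynomial.coeff_X_pow,
      Polynomial.coeff_X, Polynomial.coeff_C, Polynomial.coeff_zero] at this
    norm_num at this
  have hGP : G * P = 0 := by
    refine Polynomial.funext fun t => ?_
    rw [Polynomial.eval_mul, Polynomial.eval_zero, mul_eq_zero, or_iff_not_imp_left]
    intro hg
    rw [hP]
    by_contra hd
    have hu : IsUnit (f (x + t • h0)) := (LinearMap.isUnit_iff_isUnit_det _).2 (Ne.isUnit hd)
    have hi := ((Module.End.isUnit_iff _).1 hu).injective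
    have hz : f (x + t • h0) (Submodule.Quotient.mk (cube (phi (x + t • h0)))) = 0 := by
      rw [f_mk, lie_cube, Submodule.Quotient.mk_zero]
    have := (Submodule.Quotient.mk_eq_zero _).1 (hi (hz.trans (map_zero _).symm))
    obtain ⟨z, hz⟩ := this
    refine hg ?_
    have hz' : phi z = cube (phi (x + t • h0)) := hz
    rw [hG, ← hz', ell_phi]
  have hd : LinearMap.det (f x) = 0 := by
    have := hP 0
    rwa [(mul_eq_zero.1 hGP).resolve_left hG0, zero_smul, add_zero, Polynomial.eval_zero,
      eq_comm] at this
  have hk := LinearMap.bot_lt_ker_of_det_eq_zero hd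
  obtain ⟨q, hq, hq0⟩ := Submodule.exists_mem_ne_zero_of_ne_bot hk.ne'
  obtain ⟨y, rfl⟩ := Submodule.Quotient.mk_surjective _ q
  refine ⟨y, fun h => hq0 ((Submodule.Quotient.mk_eq_zero _).2 h), ?_⟩
  rw [LinearMap.mem_ker, f_mk] at hq
  exact (Submodule.Quotient.mk_eq_zero _).1 hq

/-- A Cartan subalgebra normalizing the image lies in the image, which is its own
normalizer; a generic element of it would act invertibly on the quotient, against `singular`. -/
lemma not_regular : ¬phi.range.IsRegularSubalgebra := by
  rintro ⟨H, hH, hn⟩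
  have hN : phi.range.normalizer = phi.range := by
    refine eq_range _ (fun h => Bl_e0_not_mem ?_) (LieSubalgebra.le_normalizer _)
    -- If everything normalizes the image, the eigenvector `Bl e0 e0` of `ad h0` lies in it.
    have h₁ : ⁅phi h0, Bl e0 e0⁆ ∈ phi.range := by
      rw [← lie_skew]
      exact phi.range.neg_mem ((LieSubalgebra.mem_normalizer_iff _ _).1
        (h ▸ LieSubalgebra.mem_top (Bl e0 e0)) _ (mem_range h0))
    have h₂ : ⁅phi h0, Bl e0 e0⁆ = (6 : ℂ) • Bl e0 e0 := by
      have h₃ : (phi h0).1 *ᵥ e0 = (3 : ℂ) • e0 := by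
        rw [h0_eq, e0_eq, mulVec_single_one]
        ext a
        by_cases ha : a = .inl 0
        · subst ha; simp [wt]
        · simp [ha]
      rw [lie_Bl, h₃, map_smul, map_smul, LinearMap.smul_apply]
      module
    rw [h₂] at h₁
    exact (phi.range.toSubmodule.smul_mem_iff (by norm_num)).1 h₁
  have hle : H ≤ phi.range := fun x hx => by
    rw [← hN, LieSubalgebra.mem_normalizer_iff]
    exact hn x hx
  obtain ⟨x, hx, hs⟩ := exists_cartan_regular H
  obtain ⟨x, rfl⟩ : ∃ x', phi x' = x := hle hx
  obtain ⟨y, hy, hy'⟩ := singular x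
  let m := phi.range.toSubmodule
  have hl : m ≤ m.comap (LieAlgebra.ad ℂ sp14 (phi x) : Module.End ℂ sp14) :=
    fun y hy => phi.range.lie_mem (mem_range x) hy
  have hsurj : Function.Surjective (Submodule.mapQ m m _ hl) := by
    intro q
    obtain ⟨w, rfl⟩ := Submodule.Quotient.mk_surjective _ q
    obtain ⟨h, hh, z, rfl⟩ := hs w
    refine ⟨Submodule.Quotient.mk z, ?_⟩
    rw [Submodule.mapQ_apply, Submodule.Quotient.eq]
    rw [LieAlgebra.ad_apply, sub_add_cancel_right]
    exact m.neg_mem (hle hh)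
  have hinj := LinearMap.injective_iff_surjective.2 hsurj
  refine hy ((Submodule.Quotient.mk_eq_zero m).1 (hinj ?_))
  rw [map_zero, Submodule.mapQ_apply, Submodule.Quotient.mk_eq_zero]
  exact hy'

end Sp6Sp14

theorem sp6_in_sp14_via_lambda30 :
    ∃ φ : ↥(Symplectic.sp (Fin 3) ℂ) →ₗ⁅ℂ⁆ ↥(Symplectic.sp (Fin 7) ℂ),
      Function.Injective φ ∧
      -- the standard 14-dimensional symplectic module is irreducible under the image of
      -- 𝔰𝔭(6,ℂ) (so the 14-dimensional irreducible module Λ³₀ℂ⁶ of 𝔰𝔭(6,ℂ) carries an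
      -- invariant nondegenerate skew-symmetric bilinear form):
      (∀ W : Submodule ℂ ((Fin 7 ⊕ Fin 7) → ℂ),
        (∀ (x : ↥(Symplectic.sp (Fin 3) ℂ)), ∀ v ∈ W,
          ((φ x : Matrix (Fin 7 ⊕ Fin 7) (Fin 7 ⊕ Fin 7) ℂ)).mulVec v ∈ W) →
        W = ⊥ ∨ W = ⊤) ∧
      -- the image is a maximal subalgebra of 𝔰𝔭(14,ℂ):
      IsMaxSubalgebra φ.range ∧
      -- the image is an S-subalgebra of 𝔰𝔭(14,ℂ):
      ¬ ∃ r : LieSubalgebra ℂ ↥(Symplectic.sp (Fin 7) ℂ),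
          r.IsRegularSubalgebra ∧ r ≠ ⊤ ∧ φ.range ≤ r := by
  refine ⟨Sp6Sp14.phi, Sp6Sp14.phi_injective, Sp6Sp14.irreducible, Sp6Sp14.isMax, ?_⟩
  rintro ⟨r, hr, hr', hle⟩
  exact Sp6Sp14.not_regular (Sp6Sp14.eq_range r hr' hle ▸ hr)
end
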